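/- (Cutting Lemma, existence part.) For every integer d ≥ 1 there exists a constant C (depending only on d) such that: for every finite set H of n ≥ 1 hyperplanes in ℝ^d and every real number r with 1 ≤ r ≤ n, there exists a finite family of pairwise disjoint convex subsets of ℝ^d whose union is all of ℝ^d, of cardinality at most C·r^d, such that every set in the family is crossed by at most n/r hyperplanes of H. -/

import Mathlib

/-!
The proof is the random sampling argument of Chazelle and Friedman, run on a decomposition into
simplices that is canonical enough to need no general position assumption.

*Decomposition.* Fix a bounded polytope. For a family of affine functionals (including those of
the polytope), each closed face has a unique point of smallest norm, its `apex`. The ray from the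
apex of the face of `x` through `x` leaves this face at the point `step x`, in a face of smaller
dimension; iterating reaches an apex after at most `d` steps. Coning the successive apices gives
the `cell` of `x`, a relatively open simplex. The cells partition the polytope, every functional
has constant sign on each cell, and each cell is certified by a bounded number of functionals
(`exists_cell_certificate`; the apices are certified by Helly's theorem). In particular a cell
present for a family `R` is present for every subfamily containing its certificate.

*Counting.* A cell is determined by the chain of faces its points visit. A weighted mean of the
points of the chain, with weights `δ ^ i` for tiny `δ`, encodes the whole chain in the signs of
parallel copies of the functionals, so the Sauer–Shelah lemma bounds the number of cells of a
family of size `m` by `O((m + 1) ^ d)` (`card_chains_le`).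

*Sampling.* For an abstract decomposition scheme with these properties, comparing a `p`-sample
with a `p / 2`-sample shows that some sample `R` satisfies
`∑ exp (p / 2 * |conflicts of Δ|) = O((p n + 1) ^ d)`, the sum over the cells of `R`
(`exists_sample`).

*Cutting.* With `p = r / n` this leaves `O(r ^ d)` cells; a cell having `t n / r` conflicts, `t > 1`,
is refined by a cutting of its conflict list of size `O(t ^ (2 d))`, itself obtained by sampling
(`exists_weak_cutting`). The exponential weights absorb the cost (`exists_cutting`).

*Whole space.* Each half-open orthant is mapped into the standard simplex by a projective
transformation, which preserves convexity and the positions relative to hyperplanes. Applying the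
cutting of the simplex in each of the `2 ^ d` orthants proves the theorem.
-/

open scoped Classical

/-- A hyperplane in `ℝ^d`: a set of the form `{x | a · x = b}` with `a ≠ 0`. -/
def IsHyperplane {d : ℕ} (h : Set (Fin d → ℝ)) : Prop :=
  ∃ (a : Fin d → ℝ) (b : ℝ), a ≠ 0 ∧ h = {x | ∑ i, a i * x i = b}

/-- A hyperplane `h` crosses a set `Δ` if `h ∩ Δ ≠ ∅` and `Δ ⊄ h`. -/
def Crosses {α : Type*} (h Δ : Set α) : Prop :=
  (h ∩ Δ).Nonempty ∧ ¬ Δ ⊆ h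

/-! ### Random sampling -/

section Sampling

variable {ι : Type*} [Fintype ι]

/-- The probability that a random subset of `ι`, containing each element independently with
probability `p`, equals `R`. -/
noncomputable def wt (p : ℝ) (R : Finset ι) : ℝ :=
  p ^ R.card * (1 - p) ^ (Fintype.card ι - R.card)

lemma wt_nonneg {p : ℝ} (h0 : 0 ≤ p) (h1 : p ≤ 1) (R : Finset ι) : 0 ≤ wt p R :=
  mul_nonneg (pow_nonneg h0 _) (pow_nonneg (by linarith) _)

lemma sum_wt (p : ℝ) : ∑ R : Finset ι, wt p R = 1 := by
  have := Fintype.sum_pow_mul_eq_add_pow ι p (1 - p)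
  simpa [wt] using this

/-- The binomial theorem, grouping the supersets `R` of a fixed set `Q`: it expresses that a
`p / 2`-sample is a `1 / 2`-subsample of a `p`-sample. -/
lemma sum_superset {ι : Type*} (p : ℝ) {Q U : Finset ι} (hQ : Q ⊆ U) :
    ∑ R ∈ U.powerset with Q ⊆ R, (p / 2) ^ R.card * (1 - p) ^ (U.card - R.card)
      = (p / 2) ^ Q.card * (1 - p / 2) ^ (U.card - Q.card) := by
  have h := Finset.sum_pow_mul_eq_add_pow (p / 2) (1 - p) (U \ Q)
  rw [Finset.card_sdiff_of_subset hQ, show p / 2 + (1 - p) = 1 - p / 2 by ring] at h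
  rw [← h, Finset.mul_sum]
  symm
  refine Finset.sum_bij' (fun t _ => Q ∪ t) (fun R _ => R \ Q) ?_ ?_ ?_ ?_ ?_
  · intro t ht
    simp only [Finset.mem_powerset, Finset.mem_filter] at ht ⊢
    exact ⟨Finset.union_subset hQ (ht.trans Finset.sdiff_subset), Finset.subset_union_left⟩
  · intro R hR
    simp only [Finset.mem_powerset, Finset.mem_filter] at hR ⊢
    exact Finset.sdiff_subset_sdiff hR.1 le_rfl
  · intro t ht
    simp only [Finset.mem_powerset] at ht
    ext i
    have := @ht i
    simp only [Finset.mem_sdiff, Finset.mem_union] at *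
    tauto
  · intro R hR
    simp only [Finset.mem_powerset, Finset.mem_filter] at hR
    exact Finset.union_sdiff_of_subset hR.2
  · intro t ht
    simp only [Finset.mem_powerset] at ht
    have hd : Disjoint Q t := Finset.disjoint_of_subset_right ht Finset.disjoint_sdiff
    rw [Finset.card_union_of_disjoint hd, pow_add, Nat.sub_sub, mul_assoc]

/-- Exponential decay. Let `𝒯` be the family of samples that produce a given cell, where `K` is
the conflict list of the cell. Cells with a long conflict list are exponentially less likely to
be produced by a `p`-sample than by a `p / 2`-sample. -/
lemma decay (𝒯 : Finset ι → Prop) [DecidablePred 𝒯] (K : Finset ι) (D₀ : ℕ)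
    (hK : ∀ R, 𝒯 R → Disjoint R K)
    (hD : ∀ R, 𝒯 R → ∃ D ⊆ R, D.card ≤ D₀ ∧ ∀ R', D ⊆ R' → R' ⊆ R → 𝒯 R')
    {p : ℝ} (h0 : 0 ≤ p) (h1 : p ≤ 1) :
    (∑ R with 𝒯 R, wt p R) * Real.exp (p / 2 * K.card)
      ≤ 2 ^ D₀ * ∑ R with 𝒯 R, wt (p / 2) R := by
  set U : Finset ι := Kᶜ with hU
  have hcard : Fintype.card ι = U.card + K.card := by
    rw [hU, Finset.card_compl]
    have := K.card_le_univ
    omega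
  have hsub : ∀ R, 𝒯 R → R ⊆ U := fun R hR => by
    rw [hU, Finset.subset_compl_iff_disjoint_right]
    exact hK R hR
  have hwt : ∀ q R, 𝒯 R →
      wt q R = (1 - q) ^ K.card * (q ^ R.card * (1 - q) ^ (U.card - R.card)) := by
    intro q R hR
    have := Finset.card_le_card (hsub R hR)
    rw [wt, hcard, show U.card + K.card - R.card = K.card + (U.card - R.card) by omega, pow_add]
    ring
  set A : ℝ := ∑ R with 𝒯 R, p ^ R.card * (1 - p) ^ (U.card - R.card) with hA
  set B : ℝ := ∑ R with 𝒯 R, (p / 2) ^ R.card * (1 - p / 2) ^ (U.card - R.card) with hB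
  have e1 : ∑ R with 𝒯 R, wt p R = (1 - p) ^ K.card * A := by
    rw [hA, Finset.mul_sum]
    exact Finset.sum_congr rfl fun R hR => hwt _ _ (by simpa using hR)
  have e2 : ∑ R with 𝒯 R, wt (p / 2) R = (1 - p / 2) ^ K.card * B := by
    rw [hB, Finset.mul_sum]
    exact Finset.sum_congr rfl fun R hR => hwt _ _ (by simpa using hR)
  have hA0 : 0 ≤ A := Finset.sum_nonneg fun R _ =>
    mul_nonneg (pow_nonneg h0 _) (pow_nonneg (by linarith) _)
  -- Conditioned on missing `K`, subsampling by `1 / 2` loses at most the factor `2 ^ D₀`.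
  have hAB : A ≤ 2 ^ D₀ * B := by
    have hB' : B = ∑ R ∈ U.powerset, ∑ Q with 𝒯 Q ∧ Q ⊆ R,
        (p / 2) ^ R.card * (1 - p) ^ (U.card - R.card) := by
      rw [hB, Finset.sum_congr rfl fun Q hQ =>
        (sum_superset p (hsub Q (by simpa using hQ))).symm]
      refine Finset.sum_comm' ?_
      intro Q R
      simp only [Finset.mem_filter, Finset.mem_univ, true_and, Finset.mem_powerset]
      tauto
    have hAsub : A ≤ ∑ R ∈ U.powerset with 𝒯 R,
        p ^ R.card * (1 - p) ^ (U.card - R.card) := by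
      refine le_of_eq (Finset.sum_congr ?_ fun _ _ => rfl)
      ext R
      simp only [Finset.mem_filter, Finset.mem_univ, true_and, Finset.mem_powerset]
      exact ⟨fun h => ⟨hsub R h, h⟩, fun h => h.2⟩
    refine hAsub.trans ?_
    rw [hB', Finset.mul_sum, Finset.sum_filter]
    refine Finset.sum_le_sum fun R _ => ?_
    have hpos : 0 ≤ p ^ R.card * (1 - p) ^ (U.card - R.card) :=
      mul_nonneg (pow_nonneg h0 _) (pow_nonneg (by linarith) _)
    have hpos' : 0 ≤ (p / 2) ^ R.card * (1 - p) ^ (U.card - R.card) :=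
      mul_nonneg (pow_nonneg (by linarith) _) (pow_nonneg (by linarith) _)
    split_ifs with hR
    · obtain ⟨D, hDR, hDc, hD'⟩ := hD R hR
      have hle : 2 ^ (R.card - D.card) ≤ (Finset.univ.filter fun Q => 𝒯 Q ∧ Q ⊆ R).card := by
        rw [← Finset.card_Icc_finset hDR]
        refine Finset.card_le_card fun Q hQ => ?_
        rw [Finset.mem_Icc] at hQ
        simp only [Finset.mem_filter, Finset.mem_univ, true_and]
        exact ⟨hD' Q hQ.1 hQ.2, hQ.2⟩
      have hle2 : 2 ^ R.card ≤ 2 ^ D₀ * (Finset.univ.filter fun Q => 𝒯 Q ∧ Q ⊆ R).card := by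
        calc 2 ^ R.card ≤ 2 ^ (D₀ + (R.card - D.card)) :=
              Nat.pow_le_pow_right (by norm_num) (by omega)
          _ = 2 ^ D₀ * 2 ^ (R.card - D.card) := pow_add _ _ _
          _ ≤ _ := Nat.mul_le_mul_left _ hle
      have hle3 : (2 : ℝ) ^ R.card
          ≤ 2 ^ D₀ * (Finset.univ.filter fun Q => 𝒯 Q ∧ Q ⊆ R).card := by exact_mod_cast hle2
      rw [Finset.sum_const, nsmul_eq_mul]
      calc p ^ R.card * (1 - p) ^ (U.card - R.card)
          = 2 ^ R.card * ((p / 2) ^ R.card * (1 - p) ^ (U.card - R.card)) := by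
            rw [div_pow]; field_simp
        _ ≤ _ := by
            rw [← mul_assoc (2 ^ D₀ : ℝ)]
            exact mul_le_mul_of_nonneg_right hle3 hpos'
    · exact mul_nonneg (by positivity) (Finset.sum_nonneg fun _ _ => hpos')
  have hexp : (1 - p) ^ K.card * Real.exp (p / 2 * K.card) ≤ (1 - p / 2) ^ K.card := by
    rw [mul_comm (p / 2), Real.exp_nat_mul, ← mul_pow]
    refine pow_le_pow_left₀ (mul_nonneg (by linarith) (Real.exp_pos _).le) ?_ _
    have he : (1 - p / 2) * Real.exp (p / 2) ≤ 1 := by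
      have := Real.add_one_le_exp (-(p / 2))
      calc (1 - p / 2) * Real.exp (p / 2) ≤ Real.exp (-(p / 2)) * Real.exp (p / 2) :=
            mul_le_mul_of_nonneg_right (by linarith) (Real.exp_pos _).le
        _ = 1 := by rw [← Real.exp_add]; simp
    have h2 : (1 - p) ≤ (1 - p / 2) * (1 - p / 2) := by nlinarith [sq_nonneg p]
    calc (1 - p) * Real.exp (p / 2) ≤ (1 - p / 2) * (1 - p / 2) * Real.exp (p / 2) :=
          mul_le_mul_of_nonneg_right h2 (Real.exp_pos _).le
      _ = (1 - p / 2) * ((1 - p / 2) * Real.exp (p / 2)) := by ring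
      _ ≤ (1 - p / 2) * 1 := mul_le_mul_of_nonneg_left he (by linarith)
      _ = _ := mul_one _
  rw [e1, e2]
  have hq : 0 ≤ (1 - p / 2) ^ K.card := pow_nonneg (by linarith) _
  calc (1 - p) ^ K.card * A * Real.exp (p / 2 * K.card)
      = ((1 - p) ^ K.card * Real.exp (p / 2 * K.card)) * A := by ring
    _ ≤ (1 - p / 2) ^ K.card * A := mul_le_mul_of_nonneg_right hexp hA0
    _ ≤ (1 - p / 2) ^ K.card * (2 ^ D₀ * B) := mul_le_mul_of_nonneg_left hAB hq
    _ = _ := by ring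

/-- The `d`-th moment of the size of a `q`-sample, by comparing the power with `(1 + s) ^ |R|`
for `s = 1 / (q n + 1)`. -/
lemma moment (d : ℕ) {q : ℝ} (h0 : 0 ≤ q) (h1 : q ≤ 1) :
    ∑ R : Finset ι, wt q R * ((R.card : ℝ) + 1) ^ d
      ≤ d.factorial * 2 ^ d * Real.exp 1 * (q * Fintype.card ι + 1) ^ d := by
  set n := Fintype.card ι with hn
  set N : ℝ := q * n + 1 with hN
  have hN1 : 1 ≤ N := by
    have : 0 ≤ q * n := by positivity
    linarith
  set s : ℝ := N⁻¹ with hs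
  have hs0 : 0 < s := inv_pos.2 (by linarith)
  have hs1 : s ≤ 1 := inv_le_one_of_one_le₀ hN1
  have hNs : N * s = 1 := mul_inv_cancel₀ (by linarith)
  have key : ∀ m : ℕ, ((m : ℝ) + 1) ^ d ≤ d.factorial * N ^ d * (2 ^ d * (1 + s) ^ m) := by
    intro m
    have a1 : ((m : ℝ) + 1) ^ d ≤ d.factorial * ((m + d).choose d : ℝ) := by
      have := Nat.pow_succ_le_ascFactorial (m + 1) d
      rw [Nat.ascFactorial_eq_factorial_mul_choose] at this
      exact_mod_cast this
    have a2 : ((m + d).choose d : ℝ) * s ^ d ≤ (1 + s) ^ (m + d) := by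
      rw [add_comm 1 s, add_pow]
      have := Finset.single_le_sum (s := Finset.range (m + d + 1))
        (f := fun k => s ^ k * 1 ^ (m + d - k) * ((m + d).choose k : ℝ))
        (fun k _ => by positivity) (Finset.mem_range.2 (show d < m + d + 1 by omega))
      refine le_trans (le_of_eq ?_) this
      simp [mul_comm]
    have a3 : ((m + d).choose d : ℝ) ≤ N ^ d * (1 + s) ^ (m + d) := by
      calc ((m + d).choose d : ℝ) = N ^ d * (((m + d).choose d : ℝ) * s ^ d) := by
            rw [mul_left_comm, ← mul_pow, hNs]; simp
        _ ≤ _ := mul_le_mul_of_nonneg_left a2 (by positivity)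
    have a4 : (1 + s) ^ (m + d) ≤ 2 ^ d * (1 + s) ^ m := by
      rw [pow_add, mul_comm]
      exact mul_le_mul_of_nonneg_right (pow_le_pow_left₀ (by linarith) (by linarith) _)
        (by positivity)
    calc ((m : ℝ) + 1) ^ d ≤ d.factorial * ((m + d).choose d : ℝ) := a1
      _ ≤ d.factorial * (N ^ d * (1 + s) ^ (m + d)) := by gcongr
      _ ≤ d.factorial * (N ^ d * (2 ^ d * (1 + s) ^ m)) := by gcongr
      _ = _ := by ring
  have gen : ∑ R : Finset ι, wt q R * (1 + s) ^ R.card = (1 + q * s) ^ n := by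
    have := Fintype.sum_pow_mul_eq_add_pow ι (q * (1 + s)) (1 - q)
    rw [show q * (1 + s) + (1 - q) = 1 + q * s by ring] at this
    rw [← this]
    refine Finset.sum_congr rfl fun R _ => ?_
    rw [wt, mul_pow]; ring
  have gen' : (1 + q * s) ^ n ≤ Real.exp 1 := by
    calc (1 + q * s) ^ n ≤ (Real.exp (q * s)) ^ n :=
          pow_le_pow_left₀ (by positivity) (by linarith [Real.add_one_le_exp (q * s)]) _
      _ = Real.exp (n * (q * s)) := by rw [Real.exp_nat_mul]
      _ ≤ Real.exp 1 := by
          refine Real.exp_le_exp.2 ?_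
          rw [← hNs, hN]
          nlinarith
  calc ∑ R : Finset ι, wt q R * ((R.card : ℝ) + 1) ^ d
      ≤ ∑ R : Finset ι, wt q R * (d.factorial * N ^ d * (2 ^ d * (1 + s) ^ R.card)) :=
        Finset.sum_le_sum fun R _ => mul_le_mul_of_nonneg_left (key _) (wt_nonneg h0 h1 R)
    _ = d.factorial * N ^ d * 2 ^ d * ∑ R : Finset ι, wt q R * (1 + s) ^ R.card := by
        rw [Finset.mul_sum]
        exact Finset.sum_congr rfl fun R _ => by ring
    _ ≤ d.factorial * N ^ d * 2 ^ d * Real.exp 1 := by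
        rw [gen]
        exact mul_le_mul_of_nonneg_left gen' (by positivity)
    _ = _ := by ring

/-- The sampling lemma: for an abstract decomposition scheme `T` with conflict lists `K`, some
sample `R` makes the sum of the exponentially weighted conflict sizes as small as the number of
cells should be. -/
lemma exists_sample {α : Type*} (T : Finset ι → Finset α) (K : α → Finset ι) (D₀ d : ℕ) (C : ℝ)
    (hK : ∀ R, ∀ Δ ∈ T R, Disjoint R (K Δ))
    (hD : ∀ R, ∀ Δ ∈ T R, ∃ D ⊆ R, D.card ≤ D₀ ∧ ∀ R', D ⊆ R' → R' ⊆ R → Δ ∈ T R')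
    (hC : ∀ R, ((T R).card : ℝ) ≤ C * ((R.card : ℝ) + 1) ^ d)
    {p : ℝ} (h0 : 0 ≤ p) (h1 : p ≤ 1) :
    ∃ R, ∑ Δ ∈ T R, Real.exp (p / 2 * (K Δ).card)
      ≤ 2 ^ D₀ * C * (d.factorial * 2 ^ d * Real.exp 1) * (p * Fintype.card ι + 1) ^ d := by
  have hC0 : 0 ≤ C := by
    have := (Nat.cast_nonneg _).trans (hC ∅)
    simpa using this
  set n := Fintype.card ι
  set M := 2 ^ D₀ * C * (d.factorial * 2 ^ d * Real.exp 1) * (p * n + 1) ^ d with hM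
  set 𝒰 : Finset α := Finset.univ.biUnion T with h𝒰
  have swap : ∀ (q : ℝ) (f : α → ℝ), ∑ R : Finset ι, wt q R * ∑ Δ ∈ T R, f Δ
      = ∑ Δ ∈ 𝒰, (∑ R with Δ ∈ T R, wt q R) * f Δ := by
    intro q f
    simp_rw [Finset.mul_sum, Finset.sum_mul]
    refine Finset.sum_comm' ?_
    intro R Δ
    simp only [h𝒰, Finset.mem_univ, true_and, Finset.mem_filter, Finset.mem_biUnion]
    exact ⟨fun h => ⟨h, R, h⟩, fun h => h.1⟩
  have main : ∑ R : Finset ι, wt p R * ∑ Δ ∈ T R, Real.exp (p / 2 * (K Δ).card)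
      ≤ ∑ R : Finset ι, wt p R * M := by
    rw [← Finset.sum_mul, sum_wt, one_mul, swap]
    calc ∑ Δ ∈ 𝒰, (∑ R with Δ ∈ T R, wt p R) * Real.exp (p / 2 * (K Δ).card)
        ≤ ∑ Δ ∈ 𝒰, 2 ^ D₀ * ∑ R with Δ ∈ T R, wt (p / 2) R :=
          Finset.sum_le_sum fun Δ _ =>
            decay (fun R => Δ ∈ T R) (K Δ) D₀
              (fun R hR => hK R Δ hR) (fun R hR => hD R Δ hR) h0 h1
      _ = 2 ^ D₀ * ∑ R : Finset ι, wt (p / 2) R * ∑ Δ ∈ T R, 1 := by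
          rw [swap, Finset.mul_sum]
          simp
      _ ≤ 2 ^ D₀ * ∑ R : Finset ι, wt (p / 2) R * (C * ((R.card : ℝ) + 1) ^ d) := by
          refine mul_le_mul_of_nonneg_left (Finset.sum_le_sum fun R _ => ?_) (by positivity)
          refine mul_le_mul_of_nonneg_left ?_ (wt_nonneg (by linarith) (by linarith) R)
          simpa using hC R
      _ = 2 ^ D₀ * C * ∑ R : Finset ι, wt (p / 2) R * ((R.card : ℝ) + 1) ^ d := by
          rw [mul_assoc, Finset.mul_sum (a := C)]
          congr 1
          exact Finset.sum_congr rfl fun R _ => by ring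
      _ ≤ 2 ^ D₀ * C * (d.factorial * 2 ^ d * Real.exp 1 * (p / 2 * n + 1) ^ d) :=
          mul_le_mul_of_nonneg_left (moment d (by linarith) (by linarith)) (by positivity)
      _ ≤ M := by
          rw [hM, mul_assoc (2 ^ D₀ * C)]
          have : p / 2 * n ≤ p * n := mul_le_mul_of_nonneg_right (by linarith) (by positivity)
          gcongr
  by_contra! hcon
  have hz : ∀ R : Finset ι, wt p R = 0 := by
    have hnn : ∀ R ∈ (Finset.univ : Finset (Finset ι)),
        0 ≤ wt p R * ((∑ Δ ∈ T R, Real.exp (p / 2 * (K Δ).card)) - M) := fun R _ =>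
      mul_nonneg (wt_nonneg h0 h1 R) (sub_nonneg.2 (hcon R).le)
    have hsum : ∑ R : Finset ι, wt p R * ((∑ Δ ∈ T R, Real.exp (p / 2 * (K Δ).card)) - M) = 0 := by
      refine le_antisymm ?_ (Finset.sum_nonneg hnn)
      simp_rw [mul_sub]
      rw [Finset.sum_sub_distrib]
      linarith
    intro R
    have := (Finset.sum_eq_zero_iff_of_nonneg hnn).1 hsum R (Finset.mem_univ R)
    exact (mul_eq_zero.1 this).resolve_right (sub_pos.2 (hcon R)).ne'
  have := sum_wt (ι := ι) p
  simp [hz] at this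

end Sampling

/-! ### Counting sign patterns and chains of faces -/

section Counting

variable {E : Type*} [AddCommGroup E] [Module ℝ E] [FiniteDimensional ℝ E]

lemma sum_choose_le (N d : ℕ) : ∑ k ∈ Finset.Iic d, N.choose k ≤ (N + 1) ^ d := by
  rw [add_pow, ← Nat.range_succ_eq_Iic]
  refine Finset.sum_le_sum fun k hk => ?_
  rw [Finset.mem_range] at hk
  rw [one_pow, mul_one]
  exact (Nat.choose_le_pow N k).trans
    (Nat.le_mul_of_pos_right _ (Nat.choose_pos (by omega)))

/-- Patterns `{l | 0 ≤ G l z}` of affine functionals on a `d`-dimensional space have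
VC dimension at most `d`: the linear parts of `d + 1` functionals are linearly dependent, so some
nontrivial linear combination of the functionals is constant, which excludes one of the patterns.
The Sauer–Shelah lemma then bounds their number. -/
lemma card_patterns_le {l : Type*} [Fintype l] (G : l → E →ᵃ[ℝ] ℝ) (𝒜 : Finset (Finset l))
    (h𝒜 : ∀ A ∈ 𝒜, ∃ z, ∀ a, a ∈ A ↔ 0 ≤ G a z) :
    𝒜.card ≤ (Fintype.card l + 1) ^ Module.finrank ℝ E := by
  refine (𝒜.card_le_card_shatterer).trans (Finset.card_shatterer_le_sum_vcDim.trans ?_)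
  have hvc : 𝒜.vcDim ≤ Module.finrank ℝ E := by
    refine Finset.sup_le fun s hs => ?_
    rw [Finset.mem_shatterer] at hs
    by_contra! hlt
    have hdep : ¬ LinearIndependent ℝ (fun a : s => ((G a).linear : Module.Dual ℝ E)) := by
      intro hli
      have := hli.fintype_card_le_finrank
      rw [Subspace.dual_finrank_eq, Fintype.card_coe] at this
      omega
    rw [Fintype.not_linearIndependent_iff] at hdep
    obtain ⟨c₀, hc₀, a₀, ha₀⟩ := hdep
    have hconst : ∀ c : s → ℝ, ∑ a, c a • ((G a).linear : Module.Dual ℝ E) = 0 → ∀ z,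
        ∑ a, c a * G a z = ∑ a, c a * G a 0 := by
      intro c hc z
      have h := congrArg (fun φ : Module.Dual ℝ E => φ z) hc
      simp only [LinearMap.coe_sum, Finset.sum_apply, LinearMap.smul_apply, smul_eq_mul,
        LinearMap.zero_apply] at h
      have h2 : ∀ a : s, G a z = (G a).linear z + G a 0 := fun a =>
        congrFun (AffineMap.decomp (G a)) z
      simp_rw [h2, mul_add, Finset.sum_add_distrib]
      rw [h]
      simp
    -- After a change of sign, the constant is positive, or zero with some positive coefficient.
    obtain ⟨c, hc, he, hpos⟩ : ∃ c : s → ℝ,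
        ∑ a, c a • ((G a).linear : Module.Dual ℝ E) = 0 ∧ 0 ≤ ∑ a, c a * G a 0 ∧
        (∑ a, c a * G a 0 = 0 → ∃ a, 0 < c a) := by
      have hneg : ∑ a, (-c₀) a • ((G a).linear : Module.Dual ℝ E) = 0 := by
        refine LinearMap.ext fun z => ?_
        have h := congrArg (fun φ : Module.Dual ℝ E => φ z) hc₀
        simp only [LinearMap.coe_sum, Finset.sum_apply, LinearMap.smul_apply, smul_eq_mul,
          LinearMap.zero_apply, Pi.neg_apply, neg_mul, Finset.sum_neg_distrib] at h ⊢
        rw [h, neg_zero]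
      have hneg' : ∑ a, (-c₀) a * G a 0 = - ∑ a, c₀ a * G a 0 := by
        simp
      rcases lt_trichotomy (∑ a, c₀ a * G a 0) 0 with h | h | h
      · exact ⟨-c₀, hneg, by rw [hneg']; linarith, fun h' => by rw [hneg'] at h'; linarith⟩
      · rcases lt_or_gt_of_ne ha₀ with h' | h'
        · exact ⟨-c₀, hneg, by rw [hneg']; linarith, fun _ => ⟨a₀, by simpa using h'⟩⟩
        · exact ⟨c₀, hc₀, h.ge, fun _ => ⟨a₀, h'⟩⟩
      · exact ⟨c₀, hc₀, h.le, fun h' => by linarith⟩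
    obtain ⟨A, hA, hsA⟩ := hs (t := s.filter fun a => ∃ h : a ∈ s, c ⟨a, h⟩ ≤ 0)
      (Finset.filter_subset _ _)
    obtain ⟨z, hz⟩ := h𝒜 A hA
    have hsign : ∀ a : s, c a ≤ 0 ↔ 0 ≤ G a z := by
      intro a
      rw [← hz]
      have := congrArg (fun t => (a : l) ∈ t) hsA
      simp only [Finset.mem_inter, Finset.mem_filter, a.2, true_and, eq_iff_iff] at this
      rw [this]
      exact ⟨fun h => ⟨trivial, h⟩, fun ⟨_, h⟩ => h⟩
    have hterm : ∀ a ∈ (Finset.univ : Finset s), c a * G a z ≤ 0 := by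
      intro a _
      by_cases h : c a ≤ 0
      · exact mul_nonpos_of_nonpos_of_nonneg h ((hsign a).1 h)
      · have h2 : G a z < 0 := not_le.1 fun h' => h ((hsign a).2 h')
        nlinarith [not_le.1 h]
    have hle := Finset.sum_nonpos hterm
    have heq := hconst c hc z
    obtain ⟨a, ha⟩ := hpos (by linarith)
    have h2 : G a z < 0 := not_le.1 fun h' => not_lt.2 ((hsign a).2 h') ha
    have : ∑ a, c a * G a z < 0 :=
      Finset.sum_neg' hterm ⟨a, Finset.mem_univ _, mul_neg_of_pos_of_neg ha h2⟩
    linarith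
  exact (Finset.sum_le_sum_of_subset (Finset.Iic_subset_Iic.2 hvc)).trans (sum_choose_le _ _)

/-- The affine combination `∑ δ ^ i y i / ∑ δ ^ i` under an affine functional. -/
lemma affine_weighted {E : Type*} [AddCommGroup E] [Module ℝ E] {m : ℕ}
    (F : E →ᵃ[ℝ] ℝ) (y : Fin (m + 1) → E) {δ : ℝ} (hδ : 0 < δ) :
    F ((∑ i : Fin (m + 1), δ ^ (i : ℕ))⁻¹ • ∑ i : Fin (m + 1), δ ^ (i : ℕ) • y i)
      = (∑ i : Fin (m + 1), δ ^ (i : ℕ))⁻¹ * ∑ i : Fin (m + 1), δ ^ (i : ℕ) * F (y i) := by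
  set W := ∑ i : Fin (m + 1), δ ^ (i : ℕ) with hW
  have hW0 : 0 < W := Finset.sum_pos (fun i _ => pow_pos hδ _) Finset.univ_nonempty
  have h2 : ∀ z, F z = F.linear z + F 0 := fun z => congrFun (AffineMap.decomp F) z
  rw [h2]
  simp_rw [h2 (y _), mul_add, Finset.sum_add_distrib]
  rw [← Finset.sum_mul, ← hW, mul_add, ← mul_assoc, inv_mul_cancel₀ hW0.ne', one_mul]
  simp

/-- Counting chains of faces. A chain is given by points `y 0, y 1, …, y m` in successively larger
faces. The point `∑ δ ^ i y i / ∑ δ ^ i` with tiny `δ` encodes the whole chain: the order of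
magnitude of `F j` at it shows the first face on which `F j` is nonzero. Hence the chains are
distinguished by the sign patterns of `m + 1` parallel copies of each functional. -/
lemma card_chains_le {μ : Type*} [Fintype μ] {m : ℕ} (F : μ → E →ᵃ[ℝ] ℝ)
    (𝒞 : Finset (Fin (m + 1) → E))
    (hmono : ∀ y ∈ 𝒞, ∀ j, ∀ i i', i ≤ i' → 0 < F j (y i) → 0 < F j (y i'))
    (hnn : ∀ y ∈ 𝒞, ∀ j, ∀ i i', 0 < F j (y i) → 0 ≤ F j (y i')) :
    (𝒞.image fun y => Finset.univ.filter fun q : μ × Fin (m + 1) => 0 < F q.1 (y q.2)).card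
      ≤ (Fintype.card μ * (m + 1) + 1) ^ Module.finrank ℝ E := by
  obtain ⟨M, hM1, hM⟩ : ∃ M : ℝ, 1 ≤ M ∧ ∀ y ∈ 𝒞, ∀ j i,
      F j (y i) ≤ M ∧ (0 < F j (y i) → M⁻¹ ≤ F j (y i)) := by
    set V : Finset ℝ := (𝒞 ×ˢ (Finset.univ : Finset (μ × Fin (m + 1)))).image
      (fun w => F w.2.1 (w.1 w.2.2)) with hV
    obtain ⟨M₁, h₁⟩ := V.exists_le
    obtain ⟨M₂, h₂⟩ := (V.image (·⁻¹)).exists_le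
    refine ⟨max 1 (max M₁ M₂), le_max_left _ _, fun y hy j i => ?_⟩
    have hmem : F j (y i) ∈ V := by
      rw [hV, Finset.mem_image]
      exact ⟨(y, j, i), by simpa using hy, rfl⟩
    refine ⟨(h₁ _ hmem).trans ((le_max_left _ _).trans (le_max_right _ _)), fun h => ?_⟩
    have := h₂ _ (Finset.mem_image_of_mem _ hmem)
    exact inv_le_of_inv_le₀ h (this.trans ((le_max_right _ _).trans (le_max_right _ _)))
  have hM0 : 0 < M := by linarith
  set δ : ℝ := ((m + 2 : ℝ) * M ^ 2)⁻¹ with hδdef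
  have hδ : 0 < δ := by positivity
  have hMM : 1 ≤ M ^ 2 := one_le_pow₀ hM1
  have hδ1 : δ ≤ 1 := by
    refine inv_le_one_of_one_le₀ ?_
    have : (1 : ℝ) ≤ m + 2 := by linarith [(Nat.cast_nonneg m : (0 : ℝ) ≤ m)]
    nlinarith
  have hδM : (m + 1 : ℝ) * (δ * M) < M⁻¹ := by
    rw [hδdef, lt_inv_comm₀ (by positivity) hM0]
    have : (m + 1 : ℝ) * (((m + 2 : ℝ) * M ^ 2)⁻¹ * M) = (m + 1) / (m + 2) * M⁻¹ := by
      field_simp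
    rw [this, mul_inv, inv_inv]
    have : (1 : ℝ) < ((m + 1 : ℝ) / (m + 2))⁻¹ := by
      rw [inv_div, one_lt_div (by positivity)]; linarith
    nlinarith
  set W := ∑ i : Fin (m + 1), δ ^ (i : ℕ) with hW
  have hW0 : 0 < W := Finset.sum_pos (fun i _ => pow_pos hδ _) Finset.univ_nonempty
  have key := card_patterns_le
    (fun q : μ × Fin (m + 1) => F q.1 - AffineMap.const ℝ E (W⁻¹ * (δ ^ (q.2 : ℕ) * M⁻¹)))
    (𝒞.image fun y => Finset.univ.filter fun q : μ × Fin (m + 1) => 0 < F q.1 (y q.2)) ?_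
  · simpa using key
  intro A hA
  rw [Finset.mem_image] at hA
  obtain ⟨y, hy, rfl⟩ := hA
  refine ⟨W⁻¹ • ∑ i : Fin (m + 1), δ ^ (i : ℕ) • y i, ?_⟩
  rintro ⟨j, i⟩
  simp only [Finset.mem_filter, Finset.mem_univ, true_and]
  have hval : (F j - AffineMap.const ℝ E (W⁻¹ * (δ ^ (i : ℕ) * M⁻¹)))
      (W⁻¹ • ∑ i : Fin (m + 1), δ ^ (i : ℕ) • y i)
      = W⁻¹ * ((∑ i : Fin (m + 1), δ ^ (i : ℕ) * F j (y i)) - δ ^ (i : ℕ) * M⁻¹) := by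
    have := affine_weighted (F j) y hδ
    rw [← hW] at this
    simp only [AffineMap.coe_sub, Pi.sub_apply, AffineMap.const_apply, this]
    ring
  rw [hval, mul_nonneg_iff_of_pos_left (inv_pos.2 hW0), sub_nonneg]
  constructor
  · intro h
    calc δ ^ (i : ℕ) * M⁻¹ ≤ δ ^ (i : ℕ) * F j (y i) :=
          mul_le_mul_of_nonneg_left ((hM y hy j i).2 h) (by positivity)
      _ ≤ _ := Finset.single_le_sum (f := fun i : Fin (m + 1) => δ ^ (i : ℕ) * F j (y i))
          (fun i' _ => mul_nonneg (by positivity) (hnn y hy j i i' h)) (Finset.mem_univ i)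
  · intro h
    by_contra hle
    have hb : ∀ i' ∈ (Finset.univ : Finset (Fin (m + 1))),
        δ ^ (i' : ℕ) * F j (y i') ≤ δ ^ (i : ℕ) * (δ * M) := by
      intro i' _
      rcases le_or_gt i' i with h' | h'
      · have : F j (y i') ≤ 0 := not_lt.1 fun h2 => hle (hmono y hy j i' i h' h2)
        exact (mul_nonpos_of_nonneg_of_nonpos (by positivity) this).trans (by positivity)
      · have h3 : (i : ℕ) + 1 ≤ i' := h'
        calc δ ^ (i' : ℕ) * F j (y i') ≤ δ ^ (i' : ℕ) * M :=
              mul_le_mul_of_nonneg_left (hM y hy j i').1 (by positivity)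
          _ ≤ δ ^ ((i : ℕ) + 1) * M :=
              mul_le_mul_of_nonneg_right (pow_le_pow_of_le_one hδ.le hδ1 h3) hM0.le
          _ = _ := by rw [pow_succ]; ring
    have := Finset.sum_le_card_nsmul _ _ _ hb
    rw [Finset.card_univ, Fintype.card_fin, nsmul_eq_mul] at this
    push_cast at this
    have h4 : δ ^ (i : ℕ) * ((m + 1 : ℝ) * (δ * M)) < δ ^ (i : ℕ) * M⁻¹ :=
      mul_lt_mul_of_pos_left hδM (by positivity)
    linarith

end Counting

/-! ### The canonical decomposition of the faces of an arrangement -/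

section Geometry

set_option linter.unusedSectionVars false

variable {E : Type*} [NormedAddCommGroup E] [InnerProductSpace ℝ E] [FiniteDimensional ℝ E]
variable {κ : Type*} (f : κ → E →ᵃ[ℝ] ℝ)

lemma affine_line {E : Type*} [AddCommGroup E] [Module ℝ E] (g : E →ᵃ[ℝ] ℝ) (v w : E) (s : ℝ) :
    g (v + s • (w - v)) = (1 - s) * g v + s * g w := by
  have h2 : ∀ z, g z = g.linear z + g 0 := fun z => congrFun (AffineMap.decomp g) z
  rw [h2, h2 v, h2 w]
  simp
  ring

/-- The points on the same side as `x`, in the weak sense, with respect to the functional `g`. -/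
def weakSide (g : E →ᵃ[ℝ] ℝ) (x : E) : Set E :=
  {y | (0 ≤ g x → 0 ≤ g y) ∧ (g x ≤ 0 → g y ≤ 0)}

/-- The closed face containing `x` in its relative interior, in the arrangement of the zero sets
of the functionals `f k`, `k ∈ S`. -/
def face (S : Finset κ) (x : E) : Set E :=
  {y | ∀ k ∈ S, y ∈ weakSide (f k) x}

/-- `x` and `y` lie in the same relatively open face. -/
def SameSign (S : Finset κ) (x y : E) : Prop :=
  ∀ k ∈ S, SignType.sign (f k x) = SignType.sign (f k y)

lemma sign_eq_iff_weak {a b : ℝ} : SignType.sign a = SignType.sign b ↔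
    (0 < a ↔ 0 < b) ∧ (a < 0 ↔ b < 0) := by
  rcases lt_trichotomy a 0 with ha | ha | ha <;> rcases lt_trichotomy b 0 with hb | hb | hb <;>
    simp [ha, hb, ha.not_gt, hb.not_gt]

lemma convex_weakSide (g : E →ᵃ[ℝ] ℝ) (x : E) : Convex ℝ (weakSide g x) := by
  have h1 : Convex ℝ {y | 0 ≤ g y} := (convex_Ici (0 : ℝ)).affine_preimage g
  have h2 : Convex ℝ {y | g y ≤ 0} := (convex_Iic (0 : ℝ)).affine_preimage g
  intro y hy z hz a b ha hb hab
  exact ⟨fun h => h1 (hy.1 h) (hz.1 h) ha hb hab, fun h => h2 (hy.2 h) (hz.2 h) ha hb hab⟩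

lemma convex_face (S : Finset κ) (x : E) : Convex ℝ (face f S x) :=
  fun _ hy _ hz _ _ ha hb hab k hk =>
    convex_weakSide (f k) x (hy k hk) (hz k hk) ha hb hab

lemma isClosed_face (S : Finset κ) (x : E) : IsClosed (face f S x) := by
  have : face f S x = ⋂ k ∈ S, ({y | 0 ≤ f k x → 0 ≤ f k y} ∩ {y | f k x ≤ 0 → f k y ≤ 0}) := by
    ext y
    simp [face, weakSide]
  rw [this]
  refine isClosed_biInter fun k _ => IsClosed.inter ?_ ?_
  · by_cases h : 0 ≤ f k x
    · simpa [h] using isClosed_le continuous_const (f k).continuous_of_finiteDimensional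
    · simp [h]
  · by_cases h : f k x ≤ 0
    · simpa [h] using isClosed_le (f k).continuous_of_finiteDimensional continuous_const
    · simp [h]

lemma self_mem_face (S : Finset κ) (x : E) : x ∈ face f S x := fun _ _ => ⟨id, id⟩

variable {f}

lemma face_anti {S S' : Finset κ} (h : S' ⊆ S) (x : E) : face f S x ⊆ face f S' x :=
  fun _ hy k hk => hy k (h hk)

lemma face_subset {S : Finset κ} {x y : E} (h : y ∈ face f S x) : face f S y ⊆ face f S x :=
  fun _ hz k hk => ⟨fun h' => (hz k hk).1 ((h k hk).1 h'), fun h' => (hz k hk).2 ((h k hk).2 h')⟩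

lemma SameSign.refl (S : Finset κ) (x : E) : SameSign f S x x := fun _ _ => rfl

lemma SameSign.symm {S : Finset κ} {x y : E} (h : SameSign f S x y) : SameSign f S y x :=
  fun k hk => (h k hk).symm

lemma SameSign.mem_face {S : Finset κ} {x y : E} (h : SameSign f S x y) : y ∈ face f S x := by
  intro k hk
  have := sign_eq_iff_weak.1 (h k hk)
  refine ⟨fun h' => not_lt.1 fun h2 => ?_, fun h' => not_lt.1 fun h2 => ?_⟩
  · exact absurd (this.2.2 h2) (not_lt.2 h')
  · exact absurd (this.1.2 h2) (not_lt.2 h')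

lemma SameSign.face_eq {S : Finset κ} {x y : E} (h : SameSign f S x y) :
    face f S x = face f S y :=
  Set.Subset.antisymm (face_subset h.symm.mem_face) (face_subset h.mem_face)

lemma eq_zero_of_mem_face {S : Finset κ} {x y : E} (h : y ∈ face f S x) {k : κ} (hk : k ∈ S)
    (h0 : f k x = 0) : f k y = 0 :=
  le_antisymm ((h k hk).2 h0.le) ((h k hk).1 h0.ge)

/-- The point of smallest norm of a set (`0` if there is none). -/
noncomputable def minPoint (P : Set E) : E :=
  if h : ∃ v ∈ P, ∀ y ∈ P, ‖v‖ ≤ ‖y‖ then h.choose else 0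

variable (f) in
/-- The apex from which a face is triangulated: its point of smallest norm. -/
noncomputable def apex (S : Finset κ) (x : E) : E := minPoint (face f S x)

lemma apex_spec (S : Finset κ) (x : E) :
    apex f S x ∈ face f S x ∧ ∀ y ∈ face f S x, ‖apex f S x‖ ≤ ‖y‖ := by
  have h : ∃ v ∈ face f S x, ∀ y ∈ face f S x, ‖v‖ ≤ ‖y‖ := by
    obtain ⟨v, hv, hv'⟩ := (isClosed_face f S x).exists_infDist_eq_dist
      ⟨x, self_mem_face f S x⟩ 0
    refine ⟨v, hv, fun y hy => ?_⟩
    have := Metric.infDist_le_dist_of_mem (x := (0 : E)) hy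
    rw [hv'] at this
    simpa using this
  rw [apex, minPoint, dif_pos h]
  exact h.choose_spec

lemma apex_unique {S : Finset κ} {x v : E} (hv : v ∈ face f S x)
    (hmin : ∀ y ∈ face f S x, ‖v‖ ≤ ‖y‖) : apex f S x = v := by
  obtain ⟨h1, h2⟩ := apex_spec (f := f) S x
  by_contra hne
  have hlt := norm_combo_lt_of_ne (h2 v hv) le_rfl hne (a := 1 / 2) (b := 1 / 2)
    (by norm_num) (by norm_num) (by norm_num)
  have hmem := convex_face f S x h1 hv (a := 1 / 2) (b := 1 / 2)
    (by norm_num) (by norm_num) (by norm_num)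
  exact absurd (hmin _ hmem) (not_le.2 hlt)

/-- By Helly's theorem, the apex of a face is already determined by few of the functionals. -/
lemma exists_apex_certificate (S : Finset κ) (x : E) :
    ∃ D ⊆ S, D.card ≤ Module.finrank ℝ E + 1 ∧
      ∀ S', D ⊆ S' → S' ⊆ S → apex f S' x = apex f S x := by
  obtain ⟨h1, h2⟩ := apex_spec (f := f) S x
  set v := apex f S x with hv
  set F : Option κ → Set E := fun o => o.elim (Metric.ball 0 ‖v‖) (fun k => weakSide (f k) x)
    with hF
  have hempty : ¬ (⋂ o ∈ Finset.insertNone S, F o).Nonempty := by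
    rintro ⟨y, hy⟩
    simp only [Set.mem_iInter] at hy
    have hb := hy none (by simp)
    have hf : y ∈ face f S x := fun k hk => hy (some k) (by simpa using hk)
    have : ‖y‖ < ‖v‖ := by simpa [hF] using hb
    exact absurd (h2 y hf) (not_le.2 this)
  have hconv : ∀ o ∈ Finset.insertNone S, Convex ℝ (F o) := by
    rintro (_ | k) _
    · exact convex_ball _ _
    · exact convex_weakSide _ _
  obtain ⟨I, hIS, hIc, hI⟩ : ∃ I ⊆ Finset.insertNone S, I.card ≤ Module.finrank ℝ E + 1 ∧
      ¬ (⋂ o ∈ I, F o).Nonempty := by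
    by_contra! hcon
    exact hempty (Convex.helly_theorem' hconv fun I hI hc => hcon I hI hc)
  refine ⟨Finset.eraseNone I, ?_, (Finset.card_eraseNone_le _).trans hIc, ?_⟩
  · intro k hk
    rw [Finset.mem_eraseNone] at hk
    simpa using hIS hk
  · intro S' hD hS'
    refine apex_unique (face_anti hS' x h1) fun y hy => ?_
    by_contra! hlt
    refine hI ⟨y, ?_⟩
    simp only [Set.mem_iInter]
    rintro (_ | k) hk
    · simpa [hF] using hlt
    · exact hy k (hD (Finset.mem_eraseNone.2 hk))

variable (f) in
/-- `w` is the point where the ray from the apex through `x` leaves the face of `x`. -/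
def IsExit (S : Finset κ) (x w : E) : Prop :=
  w ∈ face f S x ∧ (∃ τ : ℝ, 1 < τ ∧ w = apex f S x + τ • (x - apex f S x)) ∧
    ∃ k ∈ S, f k x ≠ 0 ∧ f k w = 0

lemma IsExit.ne_apex {S : Finset κ} {x w : E} (h : IsExit f S x w) : x ≠ apex f S x := by
  obtain ⟨_, ⟨τ, _, hw⟩, k, _, hk, hk'⟩ := h
  intro hx
  rw [← hx] at hw
  simp at hw
  exact hk (hw ▸ hk')

lemma IsExit.not_sameSign {S : Finset κ} {x w : E} (h : IsExit f S x w) : ¬ SameSign f S x w := by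
  obtain ⟨_, _, k, hkS, hk, hk'⟩ := h
  intro hs
  have := hs k hkS
  rw [hk', sign_zero, sign_eq_zero_iff] at this
  exact hk this

/-- Past an exit point, the ray has left the face for good. -/
lemma exit_le {S : Finset κ} {x : E} {τ τ' : ℝ} (hτ : 1 < τ)
    {k : κ} (hkS : k ∈ S) (hk : f k x ≠ 0)
    (hk' : f k (apex f S x + τ • (x - apex f S x)) = 0)
    (h' : apex f S x + τ' • (x - apex f S x) ∈ face f S x) : τ' ≤ τ := by
  have hv := (apex_spec (f := f) S x).1 k hkS
  have hw := h' k hkS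
  set v := apex f S x
  rw [affine_line] at hk'
  simp only [weakSide, Set.mem_ofPred_eq, affine_line] at hv hw
  by_contra! hlt
  rcases lt_or_gt_of_ne hk with hneg | hpos
  · have h1 := hv.2 hneg.le
    have h2 := hw.2 hneg.le
    nlinarith
  · have h1 := hv.1 hpos.le
    have h2 := hw.1 hpos.le
    nlinarith

lemma IsExit.unique {S : Finset κ} {x w w' : E} (h : IsExit f S x w) (h' : IsExit f S x w') :
    w = w' := by
  obtain ⟨hf, ⟨τ, hτ, rfl⟩, k, hkS, hk, hk0⟩ := h
  obtain ⟨hf', ⟨τ', hτ', rfl⟩, k', hkS', hk', hk0'⟩ := h'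
  have h1 := exit_le hτ hkS hk hk0 hf'
  have h2 := exit_le hτ' hkS' hk' hk0' hf
  rw [le_antisymm h1 h2]

lemma exists_exit {S : Finset κ} {x : E} (hb : Bornology.IsBounded (face f S x))
    (hx : x ≠ apex f S x) : ∃ w, IsExit f S x w := by
  have hvface := (apex_spec (f := f) S x).1
  set v := apex f S x with hv
  have hcont : Continuous fun t : ℝ => v + t • (x - v) := by fun_prop
  set I : Set ℝ := (fun t : ℝ => v + t • (x - v)) ⁻¹' face f S x with hI
  have hIclosed : IsClosed I := (isClosed_face f S x).preimage hcont
  have hne : 0 < ‖x - v‖ := norm_pos_iff.2 (sub_ne_zero.2 hx)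
  have h1I : (1 : ℝ) ∈ I := by
    simp only [hI, Set.mem_preimage, one_smul, add_sub_cancel]
    exact self_mem_face f S x
  have hIbdd : BddAbove I := by
    obtain ⟨M, hM⟩ := hb.exists_norm_le
    refine ⟨(M + ‖v‖) / ‖x - v‖, fun t ht => ?_⟩
    rw [le_div_iff₀ hne]
    have h1 := hM _ ht
    have h2 : ‖t • (x - v)‖ ≤ ‖v + t • (x - v)‖ + ‖v‖ := by
      simpa using norm_sub_le (v + t • (x - v)) v
    rw [norm_smul, Real.norm_eq_abs] at h2
    nlinarith [le_abs_self t]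
  set τ := sSup I with hτ
  have hτI : τ ∈ I := hIclosed.csSup_mem ⟨1, h1I⟩ hIbdd
  have hτ1 : 1 ≤ τ := le_csSup hIbdd h1I
  -- If no functional vanished anew at `τ`, the ray would stay in the face a little longer.
  obtain ⟨k, hkS, hk, hk0⟩ : ∃ k ∈ S, f k x ≠ 0 ∧ f k (v + τ • (x - v)) = 0 := by
    by_contra! hcon
    have hopen : ∀ᶠ t in nhds τ, t ∈ I := by
      simp only [hI, Set.mem_preimage, face, Set.mem_ofPred_eq]
      rw [Filter.eventually_all_finset]
      intro k hk
      have hc : Continuous fun t : ℝ => f k (v + t • (x - v)) :=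
        (f k).continuous_of_finiteDimensional.comp hcont
      have hτk := hτI k hk
      rcases lt_trichotomy (f k x) 0 with h | h | h
      · have hlt : f k (v + τ • (x - v)) < 0 :=
          lt_of_le_of_ne (hτk.2 h.le) (hcon k hk h.ne)
        filter_upwards [(isOpen_Iio.preimage hc).mem_nhds hlt] with t ht
        exact ⟨fun h' => absurd h (not_lt.2 h'), fun _ => le_of_lt ht⟩
      · have hv0 : f k v = 0 := eq_zero_of_mem_face hvface hk h
        refine Filter.Eventually.of_forall fun t => ?_
        simp [weakSide, affine_line, h, hv0]
      · have hlt : 0 < f k (v + τ • (x - v)) :=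
          lt_of_le_of_ne (hτk.1 h.le) (hcon k hk h.ne').symm
        filter_upwards [(isOpen_Ioi.preimage hc).mem_nhds hlt] with t ht
        exact ⟨fun _ => le_of_lt ht, fun h' => absurd h (not_lt.2 h')⟩
    obtain ⟨ε, hε, hball⟩ := Metric.eventually_nhds_iff.1 hopen
    have hmem : τ + ε / 2 ∈ I := hball (by
      rw [Real.dist_eq, add_sub_cancel_left, abs_of_pos (by linarith)]; linarith)
    have := le_csSup hIbdd hmem
    linarith
  have hτne : τ ≠ 1 := by
    intro h
    rw [h, one_smul, add_sub_cancel] at hk0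
    exact hk hk0
  exact ⟨_, hτI, ⟨τ, lt_of_le_of_ne hτ1 hτne.symm, rfl⟩, k, hkS, hk, hk0⟩

variable (f) in
/-- The exit point of the ray from the apex through `x`; it is `x` if `x` is the apex. -/
noncomputable def step (S : Finset κ) (x : E) : E :=
  if h : ∃ w, IsExit f S x w then h.choose else x

lemma step_eq {S : Finset κ} {x w : E} (h : IsExit f S x w) : step f S x = w := by
  have h' : ∃ w, IsExit f S x w := ⟨w, h⟩
  rw [step, dif_pos h']
  exact h'.choose_spec.unique h

lemma step_isExit {S : Finset κ} {x : E} (hb : Bornology.IsBounded (face f S x))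
    (hx : x ≠ apex f S x) : IsExit f S x (step f S x) := by
  obtain ⟨w, hw⟩ := exists_exit hb hx
  rwa [step_eq hw]

lemma step_apex {S : Finset κ} {x : E} (hx : x = apex f S x) : step f S x = x :=
  dif_neg fun ⟨_, hw⟩ => hw.ne_apex hx

lemma step_mem_face (S : Finset κ) (x : E) : step f S x ∈ face f S x := by
  rw [step]
  split_ifs with h
  · exact h.choose_spec.1
  · exact self_mem_face f S x

variable (f) in
/-- The cell of `x` in the decomposition: the relatively open simplex spanned by the apices met
when `step` is iterated from `x`. It is built by coning from each apex; the natural number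
bounds the number of iterations, and the description is accurate once it is at least the
dimension (see `iterate_eq_apex`). -/
noncomputable def cell (S : Finset κ) : ℕ → E → Set E
  | 0, x => {x}
  | n + 1, x => if x = apex f S x then {x} else
      {y | ∃ w ∈ cell S n (step f S x), ∃ s : ℝ, 0 < s ∧ s < 1 ∧
        y = apex f S x + s • (w - apex f S x)}

lemma convex_cell (S : Finset κ) (n : ℕ) (x : E) : Convex ℝ (cell f S n x) := by
  induction n generalizing x with
  | zero => exact convex_singleton x
  | succ n ih =>
    rw [cell]
    split_ifs with hx
    · exact convex_singleton x
    rintro _ ⟨w, hw, s, hs0, hs1, rfl⟩ _ ⟨w', hw', s', hs0', hs1', rfl⟩ a b ha hb hab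
    set v := apex f S x
    set t := a * s + b * s' with ht
    have ht0 : 0 < t := by
      rcases ha.eq_or_lt with h | h
      · have : b = 1 := by linarith
        rw [ht, ← h, this]; linarith
      · have := mul_pos h hs0
        have := mul_nonneg hb hs0'.le
        linarith
    have ht1 : t < 1 := by
      rcases ha.eq_or_lt with h | h
      · have : b = 1 := by linarith
        rw [ht, ← h, this]; linarith
      · nlinarith
    refine ⟨(a * s / t) • w + (b * s' / t) • w', ih _ hw hw' (by positivity) (by positivity)
      (by field_simp; exact ht.symm), t, ht0, ht1, ?_⟩
    have e : t • ((a * s / t) • w + (b * s' / t) • w' - v)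
        = (a * s) • w + (b * s') • w' - t • v := by
      rw [smul_sub, smul_add, smul_smul, smul_smul, mul_div_cancel₀ _ ht0.ne',
        mul_div_cancel₀ _ ht0.ne']
    rw [e, ht]
    have hb' : b = 1 - a := by linarith
    rw [hb']
    module

lemma isBounded_step {S : Finset κ} {x : E} (hb : Bornology.IsBounded (face f S x)) :
    Bornology.IsBounded (face f S (step f S x)) :=
  hb.subset (face_subset (step_mem_face S x))

lemma exists_between_step {S : Finset κ} {x : E} (hb : Bornology.IsBounded (face f S x))
    (hx : x ≠ apex f S x) : ∃ s : ℝ, 0 < s ∧ s < 1 ∧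
      x = apex f S x + s • (step f S x - apex f S x) := by
  obtain ⟨_, ⟨τ, hτ, hw⟩, _⟩ := step_isExit hb hx
  refine ⟨τ⁻¹, by positivity, inv_lt_one_of_one_lt₀ hτ, ?_⟩
  rw [hw, add_sub_cancel_left, smul_smul, inv_mul_cancel₀ (by linarith), one_smul,
    add_sub_cancel]

lemma self_mem_cell {S : Finset κ} {x : E} (hb : Bornology.IsBounded (face f S x)) (n : ℕ) :
    x ∈ cell f S n x := by
  induction n generalizing x with
  | zero => exact rfl
  | succ n ih =>
    rw [cell]
    split_ifs with hx
    · exact rfl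
    obtain ⟨s, hs0, hs1, h⟩ := exists_between_step hb hx
    exact ⟨_, ih (isBounded_step hb), s, hs0, hs1, h⟩

/-- Moving the exit point within its open face keeps the points of the ray in the same face. -/
lemma sameSign_cone {S : Finset κ} {x w : E} (hb : Bornology.IsBounded (face f S x))
    (hx : x ≠ apex f S x) (hw : SameSign f S (step f S x) w) {s : ℝ} (hs0 : 0 < s) (hs1 : s < 1) :
    SameSign f S x (apex f S x + s • (w - apex f S x)) := by
  obtain ⟨t, ht0, ht1, hxe⟩ := exists_between_step hb hx
  have hv := (apex_spec (f := f) S x).1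
  have hst := step_mem_face (f := f) S x
  set v := apex f S x
  set x' := step f S x
  intro k hk
  have hfx : f k x = (1 - t) * f k v + t * f k x' := by
    conv_lhs => rw [hxe]
    exact affine_line _ _ _ _
  have hvk := hv k hk
  have hxk := hst k hk
  have hwk := sign_eq_iff_weak.1 (hw k hk)
  simp only [weakSide, Set.mem_ofPred_eq] at hvk hxk
  rw [affine_line]
  rcases lt_trichotomy (f k x) 0 with h | h | h
  · have h1 := hvk.2 h.le
    have h2 := hxk.2 h.le
    have hneg : (1 - s) * f k v + s * f k w < 0 := by
      rcases h2.eq_or_lt with h3 | h3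
      · have hw0 : f k w ≤ 0 := not_lt.1 fun h4 => by linarith [hwk.1.2 h4]
        have : f k v < 0 := lt_of_le_of_ne h1 fun h4 => by rw [h3, h4] at hfx; linarith
        nlinarith
      · have := hwk.2.1 h3
        nlinarith
    rw [sign_neg h, sign_neg hneg]
  · have h1 : f k v = 0 := le_antisymm (hvk.2 h.le) (hvk.1 h.ge)
    have h2 : f k x' = 0 := le_antisymm (hxk.2 h.le) (hxk.1 h.ge)
    have h3 : f k w = 0 := by
      have := hw k hk
      rw [h2, sign_zero] at this
      exact sign_eq_zero_iff.1 this.symm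
    rw [h, h1, h3]; simp
  · have h1 := hvk.1 h.le
    have h2 := hxk.1 h.le
    have hpos : 0 < (1 - s) * f k v + s * f k w := by
      rcases h2.eq_or_lt with h3 | h3
      · have hw0 : 0 ≤ f k w := not_lt.1 fun h4 => by linarith [hwk.2.2 h4]
        have : 0 < f k v := lt_of_le_of_ne h1 fun h4 => by rw [← h3, ← h4] at hfx; linarith
        nlinarith
      · have := hwk.1.1 h3
        nlinarith
    rw [sign_pos h, sign_pos hpos]

lemma sameSign_of_mem_cell {S : Finset κ} {x y : E} (hb : Bornology.IsBounded (face f S x))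
    {n : ℕ} (hy : y ∈ cell f S n x) : SameSign f S x y := by
  induction n generalizing x y with
  | zero => rw [Set.mem_singleton_iff.1 hy]; exact SameSign.refl S x
  | succ n ih =>
    rw [cell] at hy
    split_ifs at hy with hx
    · rw [Set.mem_singleton_iff.1 hy]; exact SameSign.refl S x
    obtain ⟨w, hw, s, hs0, hs1, rfl⟩ := hy
    exact sameSign_cone hb hx (ih (isBounded_step hb) hw) hs0 hs1

/-- The cells are the classes of an equivalence relation. -/
lemma cell_eq_of_mem {S : Finset κ} {x y : E} (hb : Bornology.IsBounded (face f S x))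
    {n : ℕ} (hy : y ∈ cell f S n x) : cell f S n y = cell f S n x := by
  induction n generalizing x y with
  | zero => rw [Set.mem_singleton_iff.1 hy]
  | succ n ih =>
    have hsame := sameSign_of_mem_cell hb hy
    have hface := hsame.face_eq
    have hapex : apex f S y = apex f S x := by rw [apex, apex, hface]
    rw [cell] at hy
    split_ifs at hy with hx
    · rw [Set.mem_singleton_iff.1 hy]
    obtain ⟨w, hw, s, hs0, hs1, hye⟩ := hy
    have hws := sameSign_of_mem_cell (isBounded_step hb) hw
    have hexit : IsExit f S y w := by
      obtain ⟨h1, _, k, hkS, hk, hk0⟩ := step_isExit hb hx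
      refine ⟨?_, ⟨s⁻¹, one_lt_inv_iff₀.2 ⟨hs0, hs1⟩, ?_⟩, k, hkS, ?_, ?_⟩
      · rw [← hface]
        exact face_subset h1 hws.mem_face
      · rw [hapex, hye, add_sub_cancel_left, smul_smul, inv_mul_cancel₀ hs0.ne', one_smul,
          add_sub_cancel]
      · intro h0
        have := hsame k hkS
        rw [h0, sign_zero, sign_eq_zero_iff] at this
        exact hk this
      · have := hws k hkS
        rw [hk0, sign_zero] at this
        exact sign_eq_zero_iff.1 this.symm
    rw [cell, cell, if_neg hexit.ne_apex, if_neg hx, step_eq hexit, hapex,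
      ih (isBounded_step hb) hw]

/-- A cell is determined by a bounded number of the functionals: per iteration, a certificate for
the apex and one functional stopping the ray. -/
lemma exists_cell_certificate {S : Finset κ} {x : E} (hb : Bornology.IsBounded (face f S x))
    (n : ℕ) : ∃ D ⊆ S, D.card ≤ n * (Module.finrank ℝ E + 2) ∧
      ∀ S', D ⊆ S' → S' ⊆ S → cell f S' n x = cell f S n x := by
  induction n generalizing x with
  | zero => exact ⟨∅, Finset.empty_subset _, by simp, fun _ _ _ => rfl⟩
  | succ n ih =>
    obtain ⟨D₁, hD₁, hc₁, hap⟩ := exists_apex_certificate (f := f) S x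
    by_cases hx : x = apex f S x
    · refine ⟨D₁, hD₁, hc₁.trans (by nlinarith), fun S' h1 h2 => ?_⟩
      rw [cell, cell, hap S' h1 h2]
      simp [← hx]
    · obtain ⟨h1, ⟨τ, hτ, hw⟩, k, hkS, hk, hk0⟩ := step_isExit hb hx
      obtain ⟨D₂, hD₂, hc₂, hcell⟩ := ih (isBounded_step hb)
      refine ⟨D₁ ∪ insert k D₂, ?_, ?_, ?_⟩
      · exact Finset.union_subset hD₁ (Finset.insert_subset hkS hD₂)
      · have := Finset.card_union_le D₁ (insert k D₂)
        have := Finset.card_insert_le k D₂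
        nlinarith
      · intro S' hS' hS
        have hD₁' : D₁ ⊆ S' := Finset.subset_union_left.trans hS'
        have hD₂' : D₂ ⊆ S' :=
          ((Finset.subset_insert k D₂).trans Finset.subset_union_right).trans hS'
        have hk' : k ∈ S' := hS' (Finset.mem_union_right _ (Finset.mem_insert_self _ _))
        have ha := hap S' hD₁' hS
        have hexit : IsExit f S' x (step f S x) :=
          ⟨face_anti hS x h1, ⟨τ, hτ, by rw [ha]; exact hw⟩, k, hk', hk, hk0⟩
        rw [cell, cell, ha, if_neg hx, if_neg hx, step_eq hexit, hcell S' hD₂' hS]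

variable (f) in
/-- The common kernel of the linear parts of the functionals vanishing at `x`: the direction of
the affine span of the face of `x`. -/
def faceDir (S : Finset κ) (x : E) : Submodule ℝ E :=
  ⨅ k ∈ S.filter (fun k => f k x = 0), LinearMap.ker (f k).linear

lemma mem_faceDir {S : Finset κ} {x u : E} :
    u ∈ faceDir f S x ↔ ∀ k ∈ S, f k x = 0 → (f k).linear u = 0 := by
  simp [faceDir, Submodule.mem_iInf]

lemma linear_sub {E : Type*} [AddCommGroup E] [Module ℝ E] (g : E →ᵃ[ℝ] ℝ) (y z : E) :
    g.linear (y - z) = g y - g z := by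
  have h2 : ∀ z, g z = g.linear z + g 0 := fun z => congrFun (AffineMap.decomp g) z
  rw [h2 y, h2 z, map_sub]; ring

lemma IsExit.faceDir_lt {S : Finset κ} {x w : E} (h : IsExit f S x w) :
    faceDir f S w < faceDir f S x := by
  obtain ⟨h1, _, k, hkS, hk, hk0⟩ := h
  rw [SetLike.lt_iff_le_and_exists]
  refine ⟨fun u hu => ?_, w - x, ?_, ?_⟩
  · rw [mem_faceDir] at hu ⊢
    exact fun k hk h0 => hu k hk (eq_zero_of_mem_face h1 hk h0)
  · rw [mem_faceDir]
    intro k hk h0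
    rw [linear_sub, h0, eq_zero_of_mem_face h1 hk h0, sub_zero]
  · rw [mem_faceDir]
    intro hcon
    have := hcon k hkS hk0
    rw [linear_sub, hk0, zero_sub, neg_eq_zero] at this
    exact hk this

lemma isBounded_iterate {S : Finset κ} {x : E} (hb : Bornology.IsBounded (face f S x)) (i : ℕ) :
    Bornology.IsBounded (face f S ((step f S)^[i] x)) := by
  induction i with
  | zero => exact hb
  | succ i ih => rw [Function.iterate_succ_apply']; exact isBounded_step ih

/-- The dimension of the face drops in every step, so the iteration has reached an apex after
`finrank ℝ E` steps. -/
lemma iterate_eq_apex {S : Finset κ} {x : E} (hb : Bornology.IsBounded (face f S x)) :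
    (step f S)^[Module.finrank ℝ E] x = apex f S ((step f S)^[Module.finrank ℝ E] x) := by
  set d := Module.finrank ℝ E with hd
  have key : ∀ i, (step f S)^[i] x = apex f S ((step f S)^[i] x) ∨
      Module.finrank ℝ (faceDir f S ((step f S)^[i] x)) + i ≤ d := by
    intro i
    induction i with
    | zero => exact Or.inr (Submodule.finrank_le _)
    | succ i ih =>
      rw [Function.iterate_succ_apply']
      set z := (step f S)^[i] x with hz
      by_cases hza : z = apex f S z
      · left
        rw [step_apex hza]
        exact hza
      · right
        have h1 := ih.resolve_left hza
        have h2 := Submodule.finrank_lt_finrank_of_lt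
          (step_isExit (isBounded_iterate hb i) hza).faceDir_lt
        rw [← hz] at h2
        omega
  rcases key d with h | h
  · exact h
  · have h0 : faceDir f S ((step f S)^[d] x) = ⊥ := Submodule.finrank_eq_zero.1 (by omega)
    set z := (step f S)^[d] x
    have hmem : z - apex f S z ∈ faceDir f S z := by
      rw [mem_faceDir]
      intro k hk hk0
      rw [linear_sub, hk0, eq_zero_of_mem_face (apex_spec S z).1 hk hk0, sub_zero]
    rw [h0, Submodule.mem_bot, sub_eq_zero] at hmem
    exact hmem

/-- The cell depends only on the chain of open faces visited by the iteration. -/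
lemma cell_eq_of_chain {S : Finset κ} (n : ℕ) {x y : E}
    (hbx : Bornology.IsBounded (face f S x)) (hby : Bornology.IsBounded (face f S y))
    (hx : (step f S)^[n] x = apex f S ((step f S)^[n] x))
    (hy : (step f S)^[n] y = apex f S ((step f S)^[n] y))
    (h : ∀ i ≤ n, SameSign f S ((step f S)^[i] x) ((step f S)^[i] y)) :
    cell f S n x = cell f S n y := by
  induction n generalizing x y with
  | zero =>
    have hf := (h 0 le_rfl).face_eq
    simp only [Function.iterate_zero, id_eq] at hx hy hf
    rw [hx, hy, apex, apex, hf]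
  | succ n ih =>
    have h0 : SameSign f S x y := h 0 (Nat.zero_le _)
    have h1 : SameSign f S (step f S x) (step f S y) := h 1 (by omega)
    have hap : apex f S x = apex f S y := by rw [apex, apex, h0.face_eq]
    have haux : ∀ {x y : E}, Bornology.IsBounded (face f S y) → SameSign f S x y →
        SameSign f S (step f S x) (step f S y) → x = apex f S x → y = apex f S y := by
      intro x y hb h0 h1 hxa
      by_contra hya
      rw [step_apex hxa] at h1
      refine (step_isExit hb hya).not_sameSign fun k hk => ?_
      rw [← h0 k hk, h1 k hk]
    by_cases hxa : x = apex f S x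
    · have hya := haux hby h0 h1 hxa
      rw [cell, cell, if_pos hxa, if_pos hya, hxa, hya, hap]
    · have hya : y ≠ apex f S y := fun hya => hxa (haux hbx h0.symm h1.symm hya)
      rw [cell, cell, if_neg hxa, if_neg hya, hap]
      rw [Function.iterate_succ_apply] at hx hy
      rw [ih (isBounded_step hbx) (isBounded_step hby) hx hy fun i hi => ?_]
      have := h (i + 1) (by omega)
      rwa [Function.iterate_succ_apply, Function.iterate_succ_apply] at this

end Geometry

/-! ### The decomposition of a polytope induced by a sample -/

section Decomposition

variable {E : Type*} [NormedAddCommGroup E] [InnerProductSpace ℝ E] [FiniteDimensional ℝ E]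

lemma iterate_mem_face {κ : Type*} {f : κ → E →ᵃ[ℝ] ℝ} {S : Finset κ} (x : E) (i : ℕ) :
    (step f S)^[i] x ∈ face f S x := by
  induction i with
  | zero => exact self_mem_face f S x
  | succ i ih =>
    rw [Function.iterate_succ_apply']
    exact face_subset ih (step_mem_face S _)

/-- The cells of the points of `K` are represented by polynomially many points of `K`, with the
dimension as exponent. The points visited from `x` by `step` form a chain to
which `card_chains_le` applies, and their sign patterns determine the cell. -/
lemma exists_representatives {κ : Type*} (f : κ → E →ᵃ[ℝ] ℝ) (S : Finset κ) (K : Set E)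
    (hK : ∀ x ∈ K, Bornology.IsBounded (face f S x)) :
    ∃ X : Finset E, (∀ x ∈ X, x ∈ K) ∧
      (∀ x ∈ K, ∃ x' ∈ X, cell f S (Module.finrank ℝ E) x' = cell f S (Module.finrank ℝ E) x) ∧
      X.card ≤ (2 * S.card * (Module.finrank ℝ E + 1) + 1) ^ Module.finrank ℝ E := by
  set d := Module.finrank ℝ E with hd
  set F : S × Bool → E →ᵃ[ℝ] ℝ := fun q => if q.2 then f q.1 else -f q.1 with hF
  set chain : E → Fin (d + 1) → E := fun x i => (step f S)^[d - i] x with hchain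
  set pat : (Fin (d + 1) → E) → Finset ((S × Bool) × Fin (d + 1)) :=
    fun y => Finset.univ.filter fun q => 0 < F q.1 (y q.2) with hpat
  set codes : Finset (Finset ((S × Bool) × Fin (d + 1))) :=
    Finset.univ.filter fun c => ∃ x ∈ K, pat (chain x) = c with hcodes
  have hrep : ∀ c ∈ codes, ∃ x, x ∈ K ∧ pat (chain x) = c := fun c hc => by
    simpa [hcodes] using hc
  choose! rep hrepK hrepc using hrep
  have hFface : ∀ {x y : E}, y ∈ face f S x → ∀ q, (0 ≤ F q x → 0 ≤ F q y) ∧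
      (0 < F q y → 0 < F q x) := by
    rintro x y hy ⟨⟨k, hk⟩, s⟩
    have := hy k hk
    simp only [weakSide, Set.mem_ofPred_eq] at this
    cases s
    · simp only [hF, AffineMap.coe_neg, Pi.neg_apply, Bool.false_eq_true, if_false]
      refine ⟨fun h => by linarith [this.2 (by linarith)], fun h => ?_⟩
      by_contra! h'
      linarith [this.1 (by linarith)]
    · simp only [hF, if_true]
      refine ⟨this.1, fun h => ?_⟩
      by_contra! h'
      linarith [this.2 h']
  refine ⟨codes.image rep, ?_, ?_, ?_⟩
  · intro x hx
    obtain ⟨c, hc, rfl⟩ := Finset.mem_image.1 hx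
    exact hrepK c hc
  · intro x hx
    have hc : pat (chain x) ∈ codes := by
      simp only [hcodes, Finset.mem_filter, Finset.mem_univ, true_and]
      exact ⟨x, hx, rfl⟩
    refine ⟨_, Finset.mem_image_of_mem rep hc, ?_⟩
    have hbx := hK x hx
    have hby := hK _ (hrepK _ hc)
    refine cell_eq_of_chain d hby hbx (iterate_eq_apex hby) (iterate_eq_apex hbx) ?_
    intro i hi k hk
    have hmem : ∀ s, 0 < F (⟨k, hk⟩, s) ((step f S)^[i] (rep (pat (chain x)))) ↔
        0 < F (⟨k, hk⟩, s) ((step f S)^[i] x) := by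
      intro s
      have := Finset.ext_iff.1 (hrepc _ hc) ((⟨k, hk⟩, s), ⟨d - i, by omega⟩)
      simpa [hpat, hchain, Nat.sub_sub_self hi] using this
    rw [sign_eq_iff_weak]
    refine ⟨by simpa [hF] using hmem true, by simpa [hF] using hmem false⟩
  · refine Finset.card_image_le.trans ?_
    have hsub : codes ⊆ ((codes.image rep).image chain).image pat := by
      intro c hc
      rw [← hrepc c hc]
      exact Finset.mem_image_of_mem _ (Finset.mem_image_of_mem _ (Finset.mem_image_of_mem _ hc))
    refine (Finset.card_le_card hsub).trans ?_
    have := card_chains_le F ((codes.image rep).image chain) ?_ ?_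
    · refine (le_of_eq (by congr!)).trans (this.trans (le_of_eq ?_))
      simp only [Fintype.card_prod, Fintype.card_coe, Fintype.card_bool]
      rw [← hd, mul_comm S.card 2]
    · intro y hy q i i' hii h
      obtain ⟨x, -, rfl⟩ := Finset.mem_image.1 hy
      refine (hFface ?_ q).2 h
      have e : d - (i : ℕ) = (i' - i : ℕ) + (d - i') := by
        have := i'.2
        have : (i : ℕ) ≤ i' := hii
        omega
      simp only [hchain]
      rw [e, Function.iterate_add_apply]
      exact iterate_mem_face _ _
    · intro y hy q i i' h
      obtain ⟨x, -, rfl⟩ := Finset.mem_image.1 hy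
      have h1 := (hFface (iterate_mem_face x (d - i)) q).2 h
      exact (hFface (iterate_mem_face x (d - i')) q).1 h1.le

/-- The functionals of the family `g` whose sign is not constant on `Δ`. -/
noncomputable def conflicts {X ι : Type*} [Fintype ι] (g : ι → X → ℝ) (Δ : Set X) : Finset ι :=
  Finset.univ.filter fun i => ¬ ∀ x ∈ Δ, ∀ y ∈ Δ, SignType.sign (g i x) = SignType.sign (g i y)

/-- The decomposition scheme of a bounded polytope `{x | ∀ j, 0 ≤ b j x}` to which the sampling
lemma is applied. -/
lemma exists_decomposition {ι β : Type*} [Fintype ι] [Fintype β] (g : ι → E →ᵃ[ℝ] ℝ)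
    (b : β → E →ᵃ[ℝ] ℝ) (hb : Bornology.IsBounded {x | ∀ j, 0 ≤ b j x}) :
    ∃ T : Finset ι → Finset (Set E),
      (∀ R, ∀ Δ ∈ T R, Convex ℝ Δ) ∧
      (∀ R, ∀ Δ ∈ T R, ∀ Δ' ∈ T R, Δ ≠ Δ' → Disjoint Δ Δ') ∧
      (∀ R x, (∀ j, 0 ≤ b j x) → ∃ Δ ∈ T R, x ∈ Δ) ∧
      (∀ R, ∀ Δ ∈ T R, Disjoint R (conflicts (fun i x => g i x) Δ)) ∧
      (∀ R, ∀ Δ ∈ T R, ∃ D ⊆ R,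
        D.card ≤ Module.finrank ℝ E * (Module.finrank ℝ E + 2) ∧
        ∀ R', D ⊆ R' → R' ⊆ R → Δ ∈ T R') ∧
      ∀ R, (T R).card ≤ (2 * (R.card + Fintype.card β) * (Module.finrank ℝ E + 1) + 1) ^
        Module.finrank ℝ E := by
  set K : Set E := {x | ∀ j, 0 ≤ b j x} with hK
  set f : ι ⊕ β → E →ᵃ[ℝ] ℝ := Sum.elim g b with hf
  set S : Finset ι → Finset (ι ⊕ β) := fun R => R.disjSum Finset.univ with hS
  set d := Module.finrank ℝ E with hd
  have hbdd : ∀ R, ∀ x ∈ K, Bornology.IsBounded (face f (S R) x) := by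
    intro R x hx
    refine hb.subset fun y hy j => ?_
    exact (hy (Sum.inr j) (by simp [hS])).1 (hx j)
  choose X hXK hXrep hXcard using fun R => exists_representatives f (S R) K (hbdd R)
  have hmem : ∀ R Δ, Δ ∈ (X R).image (cell f (S R) d) ↔ ∃ x ∈ K, cell f (S R) d x = Δ := by
    intro R Δ
    rw [Finset.mem_image]
    constructor
    · rintro ⟨x, hx, h⟩
      exact ⟨x, hXK R x hx, h⟩
    · rintro ⟨x, hx, h⟩
      obtain ⟨x', hx', h'⟩ := hXrep R x hx
      exact ⟨x', hx', h'.trans h⟩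
  refine ⟨fun R => (X R).image (cell f (S R) d), ?_, ?_, ?_, ?_, ?_, ?_⟩
  · intro R Δ hΔ
    obtain ⟨x, -, rfl⟩ := (hmem R Δ).1 hΔ
    exact convex_cell _ _ _
  · intro R Δ hΔ Δ' hΔ' hne
    obtain ⟨x, hx, rfl⟩ := (hmem R Δ).1 hΔ
    obtain ⟨x', hx', rfl⟩ := (hmem R Δ').1 hΔ'
    rw [Set.disjoint_left]
    intro z hz hz'
    exact hne ((cell_eq_of_mem (hbdd R x hx) hz).symm.trans (cell_eq_of_mem (hbdd R x' hx') hz'))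
  · intro R x hx
    exact ⟨_, (hmem R _).2 ⟨x, hx, rfl⟩, self_mem_cell (hbdd R x hx) d⟩
  · intro R Δ hΔ
    obtain ⟨x, hx, rfl⟩ := (hmem R Δ).1 hΔ
    rw [Finset.disjoint_left]
    intro i hi hc
    simp only [conflicts, Finset.mem_filter] at hc
    refine hc.2 fun y hy z hz => ?_
    have hiS : Sum.inl i ∈ S R := by simpa [hS] using hi
    have h1 := sameSign_of_mem_cell (hbdd R x hx) hy _ hiS
    have h2 := sameSign_of_mem_cell (hbdd R x hx) hz _ hiS
    exact h1.symm.trans h2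
  · intro R Δ hΔ
    obtain ⟨x, hx, rfl⟩ := (hmem R Δ).1 hΔ
    obtain ⟨D, hDS, hDc, hD⟩ := exists_cell_certificate (hbdd R x hx) d
    refine ⟨D.toLeft, ?_, Finset.card_toLeft_le.trans hDc, ?_⟩
    · intro i hi
      simpa [hS] using hDS (Finset.mem_toLeft.1 hi)
    · intro R' h1 h2
      refine (hmem R' _).2 ⟨x, hx, hD _ ?_ ?_⟩
      · rintro (i | j) hij
        · simpa [hS] using h1 (Finset.mem_toLeft.2 hij)
        · simp [hS]
      · rintro (i | j) hij
        · simpa [hS] using h2 (by simpa [hS] using hij)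
        · simp [hS]
  · intro R
    refine Finset.card_image_le.trans ((hXcard R).trans (le_of_eq ?_))
    simp [hS, hd]

end Decomposition

/-! ### Cuttings of a polytope -/

section Cutting

/-- A finite family of pairwise disjoint convex sets covering `K` (not necessarily contained
in `K`). -/
structure IsConvexCover {E : Type*} [AddCommGroup E] [Module ℝ E] (F : Finset (Set E))
    (K : Set E) : Prop where
  convex : ∀ Δ ∈ F, Convex ℝ Δ
  disjoint : ∀ Δ ∈ F, ∀ Δ' ∈ F, Δ ≠ Δ' → Disjoint Δ Δ'
  cover : ∀ x ∈ K, ∃ Δ ∈ F, x ∈ Δ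

variable {E : Type*} [NormedAddCommGroup E] [InnerProductSpace ℝ E] [FiniteDimensional ℝ E]

/-- The sampling lemma for the decomposition of a polytope: first for a random sample, then for
the full family. -/
lemma exists_sampled_cover {β : Type*} [Fintype β] (b : β → E →ᵃ[ℝ] ℝ)
    (hb : Bornology.IsBounded {x | ∀ j, 0 ≤ b j x}) :
    ∃ A : ℝ, 1 ≤ A ∧ ∀ (ι : Type) [Fintype ι] (g : ι → E →ᵃ[ℝ] ℝ),
      (∀ p : ℝ, 0 ≤ p → p ≤ 1 → ∃ F : Finset (Set E), IsConvexCover F {x | ∀ j, 0 ≤ b j x} ∧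
        ∑ Δ ∈ F, Real.exp (p / 2 * (conflicts (fun i x => g i x) Δ).card) ≤
          A * (p * Fintype.card ι + 1) ^ Module.finrank ℝ E) ∧
      ∃ F : Finset (Set E), IsConvexCover F {x | ∀ j, 0 ≤ b j x} ∧
        (F.card : ℝ) ≤ A * ((Fintype.card ι : ℝ) + 1) ^ Module.finrank ℝ E ∧
        ∀ Δ ∈ F, (conflicts (fun i x => g i x) Δ).card = 0 := by
  set d := Module.finrank ℝ E with hd
  set B := Fintype.card β with hB
  set C : ℝ := (2 * ((B : ℝ) + 1) * (d + 1) + 1) ^ d with hC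
  have hC1 : 1 ≤ C := one_le_pow₀ (by
    have : (0 : ℝ) ≤ 2 * ((B : ℝ) + 1) * (d + 1) := by positivity
    linarith)
  set A : ℝ := 2 ^ (d * (d + 2)) * C * (d.factorial * 2 ^ d * Real.exp 1) with hA
  have hCA : C ≤ A := by
    have h1 : (1 : ℝ) ≤ 2 ^ (d * (d + 2)) := one_le_pow₀ (by norm_num)
    have h2 : (1 : ℝ) ≤ d.factorial := by exact_mod_cast Nat.one_le_iff_ne_zero.2 d.factorial_ne_zero
    have h3 : (1 : ℝ) ≤ 2 ^ d := one_le_pow₀ (by norm_num)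
    have h4 : (1 : ℝ) ≤ Real.exp 1 := Real.one_le_exp (by norm_num)
    have h5 : (1 : ℝ) ≤ d.factorial * 2 ^ d * Real.exp 1 :=
      one_le_mul_of_one_le_of_one_le (one_le_mul_of_one_le_of_one_le h2 h3) h4
    calc C = 1 * C * 1 := by ring
      _ ≤ A := by rw [hA]; gcongr
  refine ⟨A, hC1.trans hCA, fun ι _ g => ?_⟩
  obtain ⟨T, hconv, hdisj, hcov, hK, hD, hcard⟩ := exists_decomposition g b hb
  have hcard' : ∀ R, ((T R).card : ℝ) ≤ C * ((R.card : ℝ) + 1) ^ d := by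
    intro R
    have h1 : ((T R).card : ℝ) ≤ (2 * ((R.card : ℝ) + B) * (d + 1) + 1) ^ d := by
      exact_mod_cast hcard R
    refine h1.trans ?_
    rw [hC, ← mul_pow]
    have : (0 : ℝ) ≤ 2 * R.card * B * (d + 1) := by positivity
    gcongr
    have h2 : (0 : ℝ) ≤ R.card := by positivity
    have h3 : (0 : ℝ) ≤ d := by positivity
    nlinarith
  refine ⟨fun p h0 h1 => ?_, ?_⟩
  · obtain ⟨R, hR⟩ := exists_sample T (fun Δ => conflicts (fun i x => g i x) Δ) (d * (d + 2)) d C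
      hK hD hcard' h0 h1
    exact ⟨T R, ⟨hconv R, hdisj R, fun x hx => hcov R x hx⟩, hR⟩
  · refine ⟨T Finset.univ, ⟨hconv _, hdisj _, fun x hx => hcov _ x hx⟩, ?_, ?_⟩
    · refine (hcard' _).trans ?_
      rw [Finset.card_univ]
      gcongr
    · intro Δ hΔ
      have := hK _ Δ hΔ
      rw [Finset.card_eq_zero]
      rwa [← Finset.top_eq_univ, top_disjoint] at this

/-- A cutting of polynomial size with a non-optimal exponent; it serves to refine the few cells
with too many conflicts. -/
lemma exists_weak_cutting {β : Type*} [Fintype β] (b : β → E →ᵃ[ℝ] ℝ)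
    (hb : Bornology.IsBounded {x | ∀ j, 0 ≤ b j x}) (hd1 : 1 ≤ Module.finrank ℝ E) :
    ∃ A : ℝ, 0 ≤ A ∧ ∀ (ι : Type) [Fintype ι] (g : ι → E →ᵃ[ℝ] ℝ) (t : ℝ), 1 ≤ t →
      ∃ F : Finset (Set E), IsConvexCover F {x | ∀ j, 0 ≤ b j x} ∧
        (F.card : ℝ) ≤ A * t ^ (2 * Module.finrank ℝ E) ∧
        ∀ Δ ∈ F, ((conflicts (fun i x => g i x) Δ).card : ℝ) ≤ Fintype.card ι / t := by
  obtain ⟨A, hA1, hA⟩ := exists_sampled_cover b hb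
  set d := Module.finrank ℝ E with hd
  -- With a sample of expected size `M * t ^ 2`, the term of degree `2 * d` of the exponential
  -- already forces every single cell to have few conflicts.
  set M : ℝ := 8 * ((2 * d).factorial * A) with hM
  have hfac : (1 : ℝ) ≤ (2 * d).factorial := by
    exact_mod_cast Nat.one_le_iff_ne_zero.2 (Nat.factorial_ne_zero _)
  have hfA : 1 ≤ (2 * d).factorial * A := one_le_mul_of_one_le_of_one_le hfac hA1
  have hM1 : 1 ≤ M := by linarith
  have hMd : 8 ^ d * ((2 * d).factorial * A) ≤ M ^ d := by
    rw [hM, mul_pow]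
    gcongr
    exact le_self_pow₀ hfA (by omega)
  refine ⟨A * (2 * M) ^ d, by positivity, fun ι _ g t ht => ?_⟩
  obtain ⟨hsamp, hfull⟩ := hA ι g
  set k : ℝ := (Fintype.card ι : ℝ) with hk
  set ρ : ℝ := M * t ^ 2 with hρ
  have ht2 : 1 ≤ t ^ 2 := one_le_pow₀ ht
  have hρ1 : 1 ≤ ρ := one_le_mul_of_one_le_of_one_le hM1 ht2
  have hsize : A * (ρ + 1) ^ d ≤ A * (2 * M) ^ d * t ^ (2 * d) := by
    rw [mul_assoc, pow_mul, ← mul_pow]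
    gcongr
    linarith
  rcases le_or_gt k ρ with hkρ | hkρ
  · obtain ⟨F, hF, hc, h0⟩ := hfull
    refine ⟨F, hF, hc.trans (le_trans ?_ hsize), fun Δ hΔ => ?_⟩
    · gcongr
    · rw [h0 Δ hΔ]
      simp only [Nat.cast_zero]
      positivity
  · have hk0 : 0 < k := by linarith
    obtain ⟨F, hF, hsum⟩ := hsamp (ρ / k) (by positivity) ((div_le_one hk0).2 hkρ.le)
    rw [div_mul_cancel₀ _ hk0.ne'] at hsum
    refine ⟨F, hF, le_trans ?_ hsize, fun Δ hΔ => ?_⟩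
    · refine le_trans ?_ hsum
      rw [← nsmul_one, ← Finset.sum_const]
      exact Finset.sum_le_sum fun Δ _ => Real.one_le_exp (by positivity)
    · set c : ℝ := ((conflicts (fun i x => g i x) Δ).card : ℝ) with hc
      have hc0 : 0 ≤ c := by positivity
      have h1 : (ρ / k / 2 * c) ^ (2 * d) / (2 * d).factorial ≤ A * (ρ + 1) ^ d :=
        (Real.pow_div_factorial_le_exp _ (by positivity) _).trans
          ((Finset.single_le_sum (f := fun Δ => Real.exp (ρ / k / 2 *
            (conflicts (fun i x => g i x) Δ).card)) (fun _ _ => (Real.exp_pos _).le) hΔ).trans hsum)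
      have h2 : (ρ + 1) ^ d ≤ 2 ^ d * ρ ^ d := by
        rw [← mul_pow]
        gcongr
        linarith
      rw [div_le_iff₀ (by positivity)] at h1
      have h3 : (ρ / k / 2 * c) ^ (2 * d) ≤ 2 ^ d * ρ ^ d * ((2 * d).factorial * A) := by
        calc _ ≤ A * (ρ + 1) ^ d * (2 * d).factorial := h1
          _ ≤ A * (2 ^ d * ρ ^ d) * (2 * d).factorial := by gcongr
          _ = _ := by ring
      -- Multiplying by `4 ^ d` and dividing by `ρ ^ d` isolates `(c / k) ^ (2 * d)`.
      have h4 : (c / k) ^ (2 * d) * ρ ^ d ≤ M ^ d := by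
        have e : (ρ / k / 2 * c) ^ (2 * d) * 4 ^ d = ((c / k) ^ (2 * d) * ρ ^ d) * ρ ^ d := by
          rw [pow_mul, pow_mul, ← mul_pow, ← mul_pow, ← mul_pow]
          congr 1
          ring
        have h5 : ((c / k) ^ (2 * d) * ρ ^ d) * ρ ^ d ≤ M ^ d * ρ ^ d := by
          rw [← e]
          calc _ ≤ 2 ^ d * ρ ^ d * ((2 * d).factorial * A) * 4 ^ d := by gcongr
            _ = (2 * 4) ^ d * ((2 * d).factorial * A) * ρ ^ d := by rw [mul_pow 2 4]; ring
            _ = 8 ^ d * ((2 * d).factorial * A) * ρ ^ d := by norm_num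
            _ ≤ _ := by gcongr
        exact le_of_mul_le_mul_right h5 (by positivity)
      have h6 : (c / k * t) ^ (2 * d) ≤ 1 := by
        have e : (c / k) ^ (2 * d) * ρ ^ d = (c / k * t) ^ (2 * d) * M ^ d := by
          rw [hρ, mul_pow M, mul_pow (c / k), pow_mul t]
          ring
        rw [e] at h4
        have hMp : 0 < M ^ d := by positivity
        exact le_of_mul_le_mul_right (by linarith) hMp
      have h7 : c / k * t ≤ 1 := by
        by_contra! hlt
        exact absurd h6 (not_le.2 (one_lt_pow₀ hlt (by omega)))
      rw [le_div_iff₀ (by linarith)]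
      rw [div_mul_eq_mul_div, div_le_one hk0] at h7
      exact h7

/-- The cutting lemma for a bounded polytope and affine functionals. -/
lemma exists_cutting {β : Type*} [Fintype β] (b : β → E →ᵃ[ℝ] ℝ)
    (hb : Bornology.IsBounded {x | ∀ j, 0 ≤ b j x}) (hd1 : 1 ≤ Module.finrank ℝ E) :
    ∃ A : ℝ, 0 ≤ A ∧ ∀ (ι : Type) [Fintype ι] (g : ι → E →ᵃ[ℝ] ℝ) (r : ℝ), 1 ≤ r →
      r ≤ Fintype.card ι →
      ∃ F : Finset (Set E), IsConvexCover F {x | ∀ j, 0 ≤ b j x} ∧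
        (F.card : ℝ) ≤ A * r ^ Module.finrank ℝ E ∧
        ∀ Δ ∈ F, ((conflicts (fun i x => g i x) Δ).card : ℝ) ≤ Fintype.card ι / r := by
  obtain ⟨A, hA1, hA⟩ := exists_sampled_cover b hb
  obtain ⟨A', hA'0, hA'⟩ := exists_weak_cutting b hb hd1
  set d := Module.finrank ℝ E with hd
  set Q : ℝ := 4 ^ d * (2 * d).factorial with hQ
  have hfac : (1 : ℝ) ≤ (2 * d).factorial := by
    exact_mod_cast Nat.one_le_iff_ne_zero.2 (Nat.factorial_ne_zero _)
  have hQ1 : 1 ≤ Q := one_le_mul_of_one_le_of_one_le (one_le_pow₀ (by norm_num)) hfac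
  refine ⟨A' * Q * (A * 2 ^ d), by positivity, fun ι _ g r hr hrn => ?_⟩
  set n : ℝ := (Fintype.card ι : ℝ) with hn
  have hn0 : 0 < n := by linarith
  obtain ⟨F₀, hF₀, hsum⟩ := (hA ι g).1 (r / n) (by positivity) ((div_le_one hn0).2 hrn)
  rw [← hn, div_mul_cancel₀ _ hn0.ne'] at hsum
  set c : Set E → ℝ := fun Δ => (conflicts (fun i x => g i x) Δ).card with hc
  -- A cell whose conflict list exceeds `n / r` by the factor `t` is refined by a weak cutting
  -- with parameter `t`; the exponential sum pays for the `t ^ (2 * d)` pieces.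
  set t : Set E → ℝ := fun Δ => max 1 (c Δ * r / n) with ht
  choose G hGcov hGcard hGconf using fun Δ : Set E =>
    hA' (conflicts (fun i x => g i x) Δ) (fun i => g i) (t Δ) (le_max_left _ _)
  refine ⟨F₀.biUnion fun Δ => (G Δ).image (Δ ∩ ·), ⟨?_, ?_, ?_⟩, ?_, ?_⟩
  · intro Δ hΔ
    simp only [Finset.mem_biUnion, Finset.mem_image] at hΔ
    obtain ⟨Δ₁, h1, Δ₂, h2, rfl⟩ := hΔ
    exact (hF₀.convex _ h1).inter ((hGcov Δ₁).convex _ h2)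
  · intro Δ hΔ Δ' hΔ' hne
    simp only [Finset.mem_biUnion, Finset.mem_image] at hΔ hΔ'
    obtain ⟨Δ₁, h1, Δ₂, h2, rfl⟩ := hΔ
    obtain ⟨Δ₁', h1', Δ₂', h2', rfl⟩ := hΔ'
    by_cases h : Δ₁ = Δ₁'
    · subst h
      have h' : Δ₂ ≠ Δ₂' := fun h' => hne (by rw [h'])
      exact ((hGcov Δ₁).disjoint _ h2 _ h2' h').mono Set.inter_subset_right Set.inter_subset_right
    · exact (hF₀.disjoint _ h1 _ h1' h).mono Set.inter_subset_left Set.inter_subset_left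
  · intro x hx
    obtain ⟨Δ₁, h1, hx1⟩ := hF₀.cover x hx
    obtain ⟨Δ₂, h2, hx2⟩ := (hGcov Δ₁).cover x hx
    exact ⟨Δ₁ ∩ Δ₂, Finset.mem_biUnion.2 ⟨Δ₁, h1, Finset.mem_image_of_mem _ h2⟩, hx1, hx2⟩
  · have hterm : ∀ Δ, (((G Δ).image (Δ ∩ ·)).card : ℝ) ≤
        A' * Q * Real.exp (r / n / 2 * c Δ) := by
      intro Δ
      have h1 : (((G Δ).image (Δ ∩ ·)).card : ℝ) ≤ (G Δ).card := by
        exact_mod_cast Finset.card_image_le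
      refine (h1.trans (hGcard Δ)).trans ?_
      rw [mul_assoc]
      gcongr
      set y := r / n / 2 * c Δ with hy
      have hc0 : 0 ≤ c Δ := by simp [hc]
      have hy0 : 0 ≤ y := by positivity
      have hty : t Δ = max 1 (2 * y) := by
        have : 2 * y = c Δ * r / n := by rw [hy]; ring
        rw [this]
      have hexp : 1 ≤ Real.exp y := Real.one_le_exp hy0
      rw [hty]
      rcases le_total 1 (2 * y) with h | h
      · rw [max_eq_right h]
        have h3 := Real.pow_div_factorial_le_exp y hy0 (2 * d)
        rw [div_le_iff₀ (by positivity)] at h3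
        calc (2 * y) ^ (2 * d) = 4 ^ d * y ^ (2 * d) := by
              rw [mul_pow, pow_mul (2 : ℝ)]; norm_num
          _ ≤ 4 ^ d * (Real.exp y * (2 * d).factorial) := by gcongr
          _ = Q * Real.exp y := by rw [hQ]; ring
      · rw [max_eq_left h, one_pow]
        exact one_le_mul_of_one_le_of_one_le hQ1 hexp
    calc ((F₀.biUnion fun Δ => (G Δ).image (Δ ∩ ·)).card : ℝ)
        ≤ ∑ Δ ∈ F₀, (((G Δ).image (Δ ∩ ·)).card : ℝ) := by
          exact_mod_cast Finset.card_biUnion_le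
      _ ≤ ∑ Δ ∈ F₀, A' * Q * Real.exp (r / n / 2 * c Δ) := Finset.sum_le_sum fun Δ _ => hterm Δ
      _ = A' * Q * ∑ Δ ∈ F₀, Real.exp (r / n / 2 * c Δ) := by rw [Finset.mul_sum]
      _ ≤ A' * Q * (A * (r + 1) ^ d) := by gcongr
      _ ≤ A' * Q * (A * (2 * r) ^ d) := by gcongr; linarith
      _ = _ := by rw [mul_pow]; ring
  · intro Δ hΔ
    simp only [Finset.mem_biUnion, Finset.mem_image] at hΔ
    obtain ⟨Δ₁, h1, Δ₂, h2, rfl⟩ := hΔ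
    have hsub : conflicts (fun i x => g i x) (Δ₁ ∩ Δ₂) ⊆
        (conflicts (fun (i : conflicts (fun i x => g i x) Δ₁) x => g i x) Δ₂).map
          (Function.Embedding.subtype _) := by
      intro i hi
      have hi' : ¬ ∀ x ∈ Δ₁ ∩ Δ₂, ∀ y ∈ Δ₁ ∩ Δ₂,
          SignType.sign (g i x) = SignType.sign (g i y) := by
        simpa only [conflicts, Finset.mem_filter, Finset.mem_univ, true_and] using hi
      have hi1 : i ∈ conflicts (fun i x => g i x) Δ₁ := by
        simp only [conflicts, Finset.mem_filter, Finset.mem_univ, true_and]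
        exact fun h => hi' fun x hx y hy => h x hx.1 y hy.1
      refine Finset.mem_map.2 ⟨⟨i, hi1⟩, ?_, rfl⟩
      refine Finset.mem_filter.2 ⟨Finset.mem_univ _, ?_⟩
      exact fun h => hi' fun x hx y hy => h x hx.2 y hy.2
    have h3 := Finset.card_le_card hsub
    rw [Finset.card_map] at h3
    have h4 := hGconf Δ₁ Δ₂ h2
    rw [Fintype.card_coe] at h4
    refine (Nat.cast_le.2 h3).trans (h4.trans ?_)
    have ht1 : 1 ≤ t Δ₁ := le_max_left _ _
    have ht2 : c Δ₁ * r / n ≤ t Δ₁ := le_max_right _ _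
    rw [div_le_iff₀ hn0] at ht2
    rw [div_le_div_iff₀ (by linarith) (by linarith)]
    linarith

end Cutting

/-! ### From the standard simplex to the whole space -/

section Orthants

variable {d : ℕ}

/-- The affine functional `u ↦ ∑ i, a i * u i + c`. -/
noncomputable def affFun (a : Fin d → ℝ) (c : ℝ) : EuclideanSpace ℝ (Fin d) →ᵃ[ℝ] ℝ :=
  (∑ i, a i • (EuclideanSpace.proj i : EuclideanSpace ℝ (Fin d) →L[ℝ] ℝ)).toLinearMap.toAffineMap +
    AffineMap.const ℝ _ c

lemma affFun_apply (a : Fin d → ℝ) (c : ℝ) (u : EuclideanSpace ℝ (Fin d)) :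
    affFun a c u = ∑ i, a i * u i + c := by
  simp [affFun]

/-- The functionals cutting out the standard simplex `{u | 0 ≤ u i, ∑ i, u i ≤ 1}`. -/
noncomputable def simplexFun (d : ℕ) : Option (Fin d) → EuclideanSpace ℝ (Fin d) →ᵃ[ℝ] ℝ
  | none => affFun (fun _ => -1) 1
  | some i => affFun (Pi.single i 1) 0

lemma mem_simplex {u : EuclideanSpace ℝ (Fin d)} :
    (∀ j, 0 ≤ simplexFun d j u) ↔ (∀ i, 0 ≤ u i) ∧ ∑ i, u i ≤ 1 := by
  rw [Option.forall, and_comm]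
  simp [simplexFun, affFun_apply, Pi.single_apply]

lemma isBounded_simplex (d : ℕ) : Bornology.IsBounded {u | ∀ j, 0 ≤ simplexFun d j u} := by
  rw [isBounded_iff_forall_norm_le]
  refine ⟨1, fun u hu => ?_⟩
  obtain ⟨h0, h1⟩ := mem_simplex.1 hu
  rw [EuclideanSpace.norm_eq, Real.sqrt_le_left zero_le_one, one_pow]
  refine le_trans (Finset.sum_le_sum fun i _ => ?_) h1
  have : u i ≤ 1 := (Finset.single_le_sum (fun i _ => h0 i) (Finset.mem_univ i)).trans h1
  rw [Real.norm_eq_abs, sq_abs]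
  nlinarith [h0 i]

/-- The sign vector of the orthant encoded by `s`. -/
def orthSign (s : Fin d → Bool) (i : Fin d) : ℝ := if s i then 1 else -1

/-- The orthant encoded by `s`, half-open so that the orthants partition the space. -/
def orthant (s : Fin d → Bool) : Set (Fin d → ℝ) := {x | ∀ i, s i = true ↔ 0 ≤ x i}

/-- The denominator of `orthMap`. -/
def orthDen (s : Fin d → Bool) (x : Fin d → ℝ) : ℝ := 1 + ∑ i, orthSign s i * x i

/-- The projective transformation mapping an orthant into the standard simplex. -/
noncomputable def orthMap (s : Fin d → Bool) (x : Fin d → ℝ) : EuclideanSpace ℝ (Fin d) :=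
  WithLp.toLp 2 fun i => orthSign s i * x i / orthDen s x

/-- The functional whose zero set is the image of the hyperplane `∑ i, a i * x i = b` under
`orthMap s`. -/
noncomputable def orthFun (s : Fin d → Bool) (a : Fin d → ℝ) (b : ℝ) :
    EuclideanSpace ℝ (Fin d) →ᵃ[ℝ] ℝ :=
  affFun (fun i => a i * orthSign s i + b) (-b)

lemma orthSign_mul_nonneg {s : Fin d → Bool} {x : Fin d → ℝ} (hx : x ∈ orthant s) (i : Fin d) :
    0 ≤ orthSign s i * x i := by
  have := hx i
  by_cases h : s i = true
  · simpa [orthSign, h] using this.1 h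
  · have hneg : x i < 0 := not_le.1 fun h' => h (this.2 h')
    simp [orthSign, h, hneg.le]

lemma orthDen_pos {s : Fin d → Bool} {x : Fin d → ℝ} (hx : x ∈ orthant s) : 0 < orthDen s x := by
  have := Finset.sum_nonneg fun i (_ : i ∈ Finset.univ) => orthSign_mul_nonneg hx i
  rw [orthDen]
  linarith

lemma orthMap_mem_simplex {s : Fin d → Bool} {x : Fin d → ℝ} (hx : x ∈ orthant s) (j) :
    0 ≤ simplexFun d j (orthMap s x) := by
  revert j
  have hq := orthDen_pos hx
  refine mem_simplex.2 ⟨fun i => div_nonneg (orthSign_mul_nonneg hx i) hq.le, ?_⟩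
  simp only [orthMap]
  rw [← Finset.sum_div, div_le_one hq, orthDen]
  linarith

lemma orthFun_orthMap {s : Fin d → Bool} {x : Fin d → ℝ} (hx : x ∈ orthant s)
    (a : Fin d → ℝ) (b : ℝ) :
    orthFun s a b (orthMap s x) = (∑ i, a i * x i - b) / orthDen s x := by
  have hq := orthDen_pos hx
  rw [orthFun, affFun_apply, eq_div_iff hq.ne', add_mul, Finset.sum_mul]
  have hterm : ∀ i, (a i * orthSign s i + b) * (orthMap s x) i * orthDen s x =
      a i * x i + b * (orthSign s i * x i) := by
    intro i
    have h1 : orthSign s i * orthSign s i = 1 := by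
      unfold orthSign; split_ifs <;> norm_num
    have h2 : (orthMap s x) i * orthDen s x = orthSign s i * x i := div_mul_cancel₀ _ hq.ne'
    rw [mul_assoc, h2]
    linear_combination a i * x i * h1
  rw [Finset.sum_congr rfl fun i _ => hterm i, Finset.sum_add_distrib, ← Finset.mul_sum, orthDen]
  ring

lemma convex_orthant (s : Fin d → Bool) : Convex ℝ (orthant s) := by
  intro x hx y hy α β hα hβ hαβ i
  have hxi := hx i
  have hyi := hy i
  simp only [Pi.add_apply, Pi.smul_apply, smul_eq_mul]
  by_cases h : s i = true
  · have := hxi.1 h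
    have := hyi.1 h
    simp only [h, true_iff]
    positivity
  · have h1 : x i < 0 := not_le.1 fun h' => h (hxi.2 h')
    have h2 : y i < 0 := not_le.1 fun h' => h (hyi.2 h')
    refine iff_of_false h (not_le.2 ?_)
    rcases hα.eq_or_lt with h3 | h3
    · have : β = 1 := by linarith
      subst h3 this
      linarith
    · nlinarith

/-- A projective transformation pulls convex sets back to convex sets. -/
lemma convex_pullback (s : Fin d → Bool) {Δ : Set (EuclideanSpace ℝ (Fin d))}
    (hΔ : Convex ℝ Δ) : Convex ℝ (orthant s ∩ orthMap s ⁻¹' Δ) := by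
  intro x hx y hy α β hα hβ hαβ
  have hz := convex_orthant s hx.1 hy.1 hα hβ hαβ
  refine ⟨hz, ?_⟩
  have hqx := orthDen_pos hx.1
  have hqy := orthDen_pos hy.1
  have hqz := orthDen_pos hz
  set z := α • x + β • y with hzdef
  have hq : orthDen s z = α * orthDen s x + β * orthDen s y := by
    have : ∑ i, orthSign s i * z i =
        α * ∑ i, orthSign s i * x i + β * ∑ i, orthSign s i * y i := by
      rw [Finset.mul_sum, Finset.mul_sum, ← Finset.sum_add_distrib]
      refine Finset.sum_congr rfl fun i _ => ?_
      simp only [hzdef, Pi.add_apply, Pi.smul_apply, smul_eq_mul]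
      ring
    simp only [orthDen, this]
    linear_combination -hαβ
  have hmap : orthMap s z = (α * orthDen s x / orthDen s z) • orthMap s x +
      (β * orthDen s y / orthDen s z) • orthMap s y := by
    ext i
    simp only [orthMap, PiLp.add_apply, PiLp.smul_apply, smul_eq_mul, hzdef, Pi.add_apply,
      Pi.smul_apply]
    rw [← hzdef]
    field_simp
  rw [Set.mem_preimage, hmap]
  refine hΔ hx.2 hy.2 (by positivity) (by positivity) ?_
  rw [← add_div, ← hq, div_self hqz.ne']

end Orthants

/-- **Cutting Lemma (existence part).** -/
theorem cutting_lemma (d : ℕ) (hd : 1 ≤ d) :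
    ∃ C : ℝ, ∀ H : Finset (Set (Fin d → ℝ)),
      1 ≤ H.card → (∀ h ∈ H, IsHyperplane h) →
      ∀ r : ℝ, 1 ≤ r → r ≤ (H.card : ℝ) →
      ∃ F : Finset (Set (Fin d → ℝ)),
        (F.card : ℝ) ≤ C * r ^ d ∧
        (∀ Δ ∈ F, Convex ℝ Δ) ∧
        (∀ Δ₁ ∈ F, ∀ Δ₂ ∈ F, Δ₁ ≠ Δ₂ → Disjoint Δ₁ Δ₂) ∧
        ⋃₀ (F : Set (Set (Fin d → ℝ))) = Set.univ ∧
        ∀ Δ ∈ F, ((H.filter fun h => Crosses h Δ).card : ℝ) ≤ (H.card : ℝ) / r := by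
  have hfin : Module.finrank ℝ (EuclideanSpace ℝ (Fin d)) = d := finrank_euclideanSpace_fin
  obtain ⟨A, hA0, hA⟩ := exists_cutting (simplexFun d) (isBounded_simplex d) (by rw [hfin]; exact hd)
  rw [hfin] at hA
  refine ⟨2 ^ d * A, fun H _ hH r hr hrn => ?_⟩
  choose! a b _ hab using hH
  choose G hGcov hGcard hGconf using fun s : Fin d → Bool =>
    hA H (fun h => orthFun s (a h) (b h)) r hr (by simpa using hrn)
  have hmem : ∀ Δ, Δ ∈ (Finset.univ.biUnion fun s => (G s).image
      fun Δ => orthant s ∩ orthMap s ⁻¹' Δ) ↔ ∃ s, ∃ Δ' ∈ G s, orthant s ∩ orthMap s ⁻¹' Δ' = Δ := by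
    intro Δ
    simp
  refine ⟨Finset.univ.biUnion fun s => (G s).image fun Δ => orthant s ∩ orthMap s ⁻¹' Δ,
    ?_, ?_, ?_, ?_, ?_⟩
  · calc _ ≤ ∑ s : Fin d → Bool,
          (((G s).image fun Δ => orthant s ∩ orthMap s ⁻¹' Δ).card : ℝ) := by
          exact_mod_cast Finset.card_biUnion_le
      _ ≤ ∑ _s : Fin d → Bool, A * r ^ d := Finset.sum_le_sum fun s _ =>
          le_trans (by exact_mod_cast Finset.card_image_le) (hGcard s)
      _ = 2 ^ d * A * r ^ d := by simp [mul_assoc]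
  · intro Δ hΔ
    obtain ⟨s, Δ', hΔ', rfl⟩ := (hmem Δ).1 hΔ
    exact convex_pullback s ((hGcov s).convex Δ' hΔ')
  · intro Δ₁ h₁ Δ₂ h₂ hne
    obtain ⟨s, Δ, hΔ, rfl⟩ := (hmem _).1 h₁
    obtain ⟨s', Δ', hΔ', rfl⟩ := (hmem _).1 h₂
    rw [Set.disjoint_left]
    rintro x ⟨hx, hxΔ⟩ ⟨hx', hxΔ'⟩
    have hs : s = s' := funext fun i => Bool.eq_iff_iff.2 ((hx i).trans (hx' i).symm)
    subst hs
    have hΔne : Δ ≠ Δ' := fun h => hne (by rw [h])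
    exact Set.disjoint_left.1 ((hGcov s).disjoint Δ hΔ Δ' hΔ' hΔne) hxΔ hxΔ'
  · refine Set.eq_univ_of_forall fun x => ?_
    set s : Fin d → Bool := fun i => decide (0 ≤ x i) with hs
    have hx : x ∈ orthant s := fun i => by simp [hs]
    obtain ⟨Δ, hΔ, hxΔ⟩ := (hGcov s).cover (orthMap s x) (orthMap_mem_simplex hx)
    exact ⟨_, Finset.mem_coe.2 ((hmem _).2 ⟨s, Δ, hΔ, rfl⟩), hx, hxΔ⟩
  · intro Δ₀ hΔ₀
    obtain ⟨s, Δ, hΔ, rfl⟩ := (hmem _).1 hΔ₀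
    have hconf := hGconf s Δ hΔ
    rw [Fintype.card_coe] at hconf
    refine le_trans (Nat.cast_le.2 ?_) hconf
    rw [← Finset.card_map (Function.Embedding.subtype (· ∈ H))]
    refine Finset.card_le_card fun h hh => ?_
    obtain ⟨hhH, ⟨x, hxh, hx, hxΔ⟩, hnot⟩ := Finset.mem_filter.1 hh
    obtain ⟨y, ⟨hy, hyΔ⟩, hyh⟩ := Set.not_subset.1 hnot
    refine Finset.mem_map.2 ⟨⟨h, hhH⟩, Finset.mem_filter.2 ⟨Finset.mem_univ _, fun hcon => ?_⟩, rfl⟩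
    have hsign := hcon _ hxΔ _ hyΔ
    simp only [orthFun_orthMap hx, orthFun_orthMap hy] at hsign
    rw [hab h hhH] at hxh hyh
    have hx0 : ∑ i, a h i * x i = b h := hxh
    have hy0 : ∑ i, a h i * y i ≠ b h := hyh
    rw [hx0, sub_self, zero_div, sign_zero, eq_comm, sign_eq_zero_iff, div_eq_zero_iff] at hsign
    rcases hsign with h1 | h1
    · exact hy0 (sub_eq_zero.1 h1)
    · exact (orthDen_pos hy).ne' h1
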